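/- arXiv:1002.0381 — 2 statements merged into one kernel-verified Lean document; each statement's English description precedes it below -/
import Mathlib

section
/- Moments of the maximum: For every Λ̄ > 0, ε > 0 and p ≥ 1 there exists a constant c = c(Λ̄, ε, p, V) > 0 such that the following holds. For every finite connected F ⊆ ℤ² of diameter R ≥ 2, every u ∈ ℝ², and every boundary condition ζ : ∂F → ℝ with max_{x∈∂F} |ζ(x) − u·x| ≤ Λ̄ (log R)^Λ̄, if h is distributed according to the GL measure P_F^ζ and M = max_{x∈F} |h(x) − u·x|, then (E[M^p])^{1/p} ≤ c·R^ε. -/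
/-!
Write `h - u · x` for the tilt-corrected height. It suffices to bound its exponential moments at
each site by `R ^ O(1)` at a scale `D = O((log R) ^ Λ + log R)`: a union bound over the `O(R²)`
sites, with moments of order `q ≥ max(p, 8 / ε)`, then gives the claim, since `D ≤ C R ^ (ε / 2)`.

*The torus.* Put `F ∪ ∂F` in the torus of side `2 ^ n`, where `R + 2 < 2 ^ n ≤ 4 R`, and consider
on it the Hamiltonian `∑ V(∇h + u)`, the additive constant being fixed by a Gaussian weight. The
point reflection `h ↦ -h(2x - ·)` preserves this measure, so `h(x) - avg h` is symmetric whatever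
the tilt `u` (`tiltInt_torU_neg`). By averaging over dyadic boxes, `(h(x) - avg h)² ≤ n² ∑ |∇h|²`
(`sq_sub_avg_le`); with the lower bound `a_V` on the second derivative of `V`, this leads to
`E exp(s (h(x) - avg h)) ≤ exp(s² (n² + 1) / a_V)` (`torus_exp_moment`).

*The Gaussian bound.* This last implication replaces the Brascamp–Lieb inequality and is obtained
by duplication (`tiltInt_step`, `tiltInt_le`). For independent copies `h, k`, rotate to
`f = (h + k) / √2`, `g = (h - k) / √2`. Given `f`, the field `g` has an even potential whose second
differences obey the same bounds, and `h(x) - k(x) = √2 g(x)`. Hence a bound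
`E exp(s v) ≤ exp(s² σ + D)` for even potentials self-improves to one with error `D / 2`. A crude
comparison with Gaussians starts the iteration with a finite error, and the error is removed in the
limit.

*Transfer to `F`.* Since `V` is convex, the density satisfies the lattice condition, so the
continuous four functions theorem (`four_functions_pi`) shows that `E exp(s h(x))` is monotone in
the boundary condition (`holley_exp`). By the spatial Markov property (`torH_glue`), the torus
measure conditioned off `F` is a GL measure on `F` with boundary condition `k(y) + u · y`. The given
`ζ` differs from `u · y` by at most `L`, so it lies below this boundary condition shifted by
`L - min_∂F k` and above it shifted by `-L - max_∂F k`. The exponential of the shift is at most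
`exp(|s| L)` times a sum of `exp(-s k(y))` over all torus sites `y`, and the torus bound for
`h(x) - h(y)` gives the exponential moments under `P_F^ζ` (`gl_exp_moment`), then the moments of the
maximum (`gl_max_moment`).
-/

open MeasureTheory ProbabilityTheory Real
open scoped ENNReal NNReal Classical

noncomputable section

abbrev Z2 := ℤ × ℤ

/-- Nearest-neighbor adjacency in `ℤ²` (Euclidean distance one). -/
def adjZ (x y : Z2) : Prop := (x.1 - y.1) ^ 2 + (x.2 - y.2) ^ 2 = 1

/-- Exterior vertex boundary `∂D` of a set `D ⊆ ℤ²`. -/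
def bdry (D : Set Z2) : Set Z2 := {x | x ∉ D ∧ ∃ y ∈ D, adjZ x y}

/-- Euclidean distance on `ℤ²`. -/
def edist2 (x y : Z2) : ℝ :=
  Real.sqrt (((x.1 : ℝ) - (y.1 : ℝ)) ^ 2 + ((x.2 : ℝ) - (y.2 : ℝ)) ^ 2)

/-- Euclidean distance from a point to a set. -/
def distToSet (x : Z2) (S : Set Z2) : ℝ := sInf (edist2 x '' S)

/-- Euclidean diameter of a set in `ℤ²`. -/
def diamZ (D : Set Z2) : ℝ := sSup {d : ℝ | ∃ x ∈ D, ∃ y ∈ D, d = edist2 x y}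

/-- Discrete Euclidean ball. -/
def ballZ (y : Z2) (r : ℝ) : Set Z2 := {z | edist2 z y ≤ r}

/-- Positively oriented nearest-neighbor edges with at least one endpoint in `D`. -/
def edgesOf (D : Set Z2) : Set (Z2 × Z2) :=
  {b | (b.2 = b.1 + ((1, 0) : Z2) ∨ b.2 = b.1 + ((0, 1) : Z2)) ∧ (b.1 ∈ D ∨ b.2 ∈ D)}

/-- Positively oriented nearest-neighbor edges with both endpoints in `D`. -/
def intEdges (D : Set Z2) : Set (Z2 × Z2) :=
  {b | (b.2 = b.1 + ((1, 0) : Z2) ∨ b.2 = b.1 + ((0, 1) : Z2)) ∧ b.1 ∈ D ∧ b.2 ∈ D}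

/-- Edges with one endpoint in `D` and the other in `∂D`. -/
def bdEdges (D : Set Z2) : Set (Z2 × Z2) :=
  {b | (b.2 = b.1 + ((1, 0) : Z2) ∨ b.2 = b.1 + ((0, 1) : Z2)) ∧
    ((b.1 ∈ D ∧ b.2 ∈ bdry D) ∨ (b.1 ∈ bdry D ∧ b.2 ∈ D))}

/-- The endpoint of an edge lying outside `D` (for boundary edges). -/
def bEnd (D : Set Z2) (b : Z2 × Z2) : Z2 := if b.1 ∈ D then b.2 else b.1

/-- Discrete gradient of `f` across the oriented edge `b`. -/
def grad (f : Z2 → ℝ) (b : Z2 × Z2) : ℝ := f b.2 - f b.1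

/-- `D ⊆ ℤ²` is connected (as an induced subgraph of the nearest-neighbor lattice). -/
def DiscConnected (D : Set Z2) : Prop :=
  D.Nonempty ∧ ∀ x ∈ D, ∀ y ∈ D, ∃ (n : ℕ) (p : ℕ → Z2),
    p 0 = x ∧ p n = y ∧ (∀ i ≤ n, p i ∈ D) ∧ ∀ i < n, adjZ (p i) (p (i + 1))

/-- `h ∨ φ`: the field `h` on `D` extended by the boundary condition `φ` off `D`. -/
def vee (D : Finset Z2) (h : ↥D → ℝ) (φ : Z2 → ℝ) : Z2 → ℝ :=
  fun x => if hx : x ∈ D then h ⟨x, hx⟩ else φ x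

/-- Ginzburg–Landau Hamiltonian `∑_{b ∈ D*} V(∇(h∨φ)(b))`. -/
def glEnergy (V : ℝ → ℝ) (D : Finset Z2) (φ : Z2 → ℝ) (h : ↥D → ℝ) : ℝ :=
  ∑ᶠ b ∈ edgesOf (D : Set Z2), V (grad (vee D h φ) b)

/-- Unnormalized GL measure: density `exp(−H)` w.r.t. Lebesgue measure on `ℝ^D`. -/
def glFree (V : ℝ → ℝ) (D : Finset Z2) (φ : Z2 → ℝ) : Measure (↥D → ℝ) :=
  volume.withDensity fun h => ENNReal.ofReal (Real.exp (-(glEnergy V D φ h)))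

/-- `P` is the GL measure on `D` with potential `V` and boundary condition `φ`:
a probability measure proportional to `exp(−H) dh`. -/
def IsGL (V : ℝ → ℝ) (D : Finset Z2) (φ : Z2 → ℝ) (P : Measure (↥D → ℝ)) : Prop :=
  IsProbabilityMeasure P ∧ ∃ c : ℝ≥0∞, c ≠ 0 ∧ c ≠ ⊤ ∧ P = c • glFree V D φ

/-- `μ` is a coupling of `P` and `Q`. -/
def IsCoupling {α : Type*} [MeasurableSpace α] (μ : Measure (α × α)) (P Q : Measure α) : Prop :=
  IsProbabilityMeasure μ ∧ μ.map Prod.fst = P ∧ μ.map Prod.snd = Q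

/-- `f` is discrete-harmonic at `x`: the sum of the increments to the four neighbors vanishes. -/
def DiscHarmAt (f : Z2 → ℝ) (x : Z2) : Prop :=
  f (x + ((1, 0) : Z2)) + f (x - ((1, 0) : Z2)) + f (x + ((0, 1) : Z2)) + f (x - ((0, 1) : Z2))
    - 4 * f x = 0

/-- `D(r) = {x ∈ D : dist(x, ∂D) ≥ r}`. -/
def innerSet (D : Finset Z2) (r : ℝ) : Set Z2 :=
  {x | x ∈ D ∧ r ≤ distToSet x (bdry (D : Set Z2))}

/-! ### The four functions theorem for Lebesgue measure -/

/-- The arithmetic behind the four functions theorem, for finite `c ≠ 0`: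
`c + d - a - b = ((c - a) (c - b) + (c d - a b)) / c`. -/
theorem four_scalar {a b c d : ℝ≥0∞} (ha : a ≤ c) (hb : b ≤ c) (hab : a * b ≤ c * d) :
    a + b ≤ c + d := by
  rcases eq_or_ne c ⊤ with rfl | hc
  · simp
  rcases eq_or_ne d ⊤ with rfl | hd
  · simp
  lift c to ℝ≥0 using hc
  lift d to ℝ≥0 using hd
  lift a to ℝ≥0 using ne_top_of_le_ne_top ENNReal.coe_ne_top ha
  lift b to ℝ≥0 using ne_top_of_le_ne_top ENNReal.coe_ne_top hb
  norm_cast at *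
  rw [← NNReal.coe_le_coe] at *
  push_cast at *
  rcases eq_or_lt_of_le c.coe_nonneg with h0 | h0
  · have := a.coe_nonneg; have := b.coe_nonneg; have := d.coe_nonneg
    linarith
  · nlinarith [mul_nonneg (sub_nonneg.2 ha) (sub_nonneg.2 hb)]

/-- One-dimensional case: after symmetrising the product integral in `(x, y)`, the inequality holds
pointwise. -/
theorem four_functions_real {f₁ f₂ f₃ f₄ : ℝ → ℝ≥0∞} (h₁ : Measurable f₁) (h₂ : Measurable f₂)
    (h₃ : Measurable f₃) (h₄ : Measurable f₄)
    (h : ∀ x y, f₁ x * f₂ y ≤ f₃ (x ⊓ y) * f₄ (x ⊔ y)) :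
    (∫⁻ x, f₁ x) * ∫⁻ x, f₂ x ≤ (∫⁻ x, f₃ x) * ∫⁻ x, f₄ x := by
  have key : ∀ f g : ℝ → ℝ≥0∞, Measurable f → Measurable g →
      2 * ((∫⁻ x, f x) * ∫⁻ x, g x) = ∫⁻ x, ∫⁻ y, (f x * g y + f y * g x) := by
    intro f g hf hg
    have e1 : (∫⁻ x, ∫⁻ y, f x * g y) = (∫⁻ x, f x) * ∫⁻ x, g x := by
      rw [← lintegral_mul_const _ hf]
      exact lintegral_congr fun x => lintegral_const_mul _ hg
    have e2 : (∫⁻ x, ∫⁻ y, f y * g x) = (∫⁻ x, f x) * ∫⁻ x, g x := by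
      rw [← lintegral_const_mul _ hg]
      exact lintegral_congr fun x => lintegral_mul_const _ hf
    rw [two_mul]
    nth_rewrite 1 [← e1]
    rw [← e2, ← lintegral_add_left (by fun_prop)]
    exact lintegral_congr fun x => (lintegral_add_left (by fun_prop) _).symm
  have : 2 * ((∫⁻ x, f₁ x) * ∫⁻ x, f₂ x) ≤ 2 * ((∫⁻ x, f₃ x) * ∫⁻ x, f₄ x) := by
    rw [key _ _ h₁ h₂, key _ _ h₃ h₄]
    refine lintegral_mono fun x => lintegral_mono fun y => ?_
    have hx := h x x
    have hy := h y y
    have hxy := h x y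
    have hyx := h y x
    have hprod : (f₁ x * f₂ y) * (f₁ y * f₂ x) ≤ (f₃ x * f₄ y) * (f₃ y * f₄ x) := by
      simp only [inf_idem, sup_idem] at hx hy
      calc _ = (f₁ x * f₂ x) * (f₁ y * f₂ y) := by ring
        _ ≤ (f₃ x * f₄ x) * (f₃ y * f₄ y) := mul_le_mul' hx hy
        _ = _ := by ring
    rcases le_total x y with hle | hle
    · rw [inf_eq_left.2 hle, sup_eq_right.2 hle] at hxy
      rw [inf_eq_right.2 hle, sup_eq_left.2 hle] at hyx
      exact four_scalar hxy hyx hprod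
    · rw [inf_eq_right.2 hle, sup_eq_left.2 hle] at hxy
      rw [inf_eq_left.2 hle, sup_eq_right.2 hle] at hyx
      rw [add_comm (f₃ x * f₄ y)]
      exact four_scalar hxy hyx (hprod.trans_eq (mul_comm _ _))
  exact (ENNReal.mul_le_mul_iff_right (by simp) (by simp)).1 this

theorem four_functions_fin (n : ℕ) : ∀ {f₁ f₂ f₃ f₄ : (Fin n → ℝ) → ℝ≥0∞}, Measurable f₁ →
    Measurable f₂ → Measurable f₃ → Measurable f₄ →
    (∀ x y, f₁ x * f₂ y ≤ f₃ (x ⊓ y) * f₄ (x ⊔ y)) →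
    (∫⁻ x, f₁ x) * ∫⁻ x, f₂ x ≤ (∫⁻ x, f₃ x) * ∫⁻ x, f₄ x := by
  induction n with
  | zero =>
    intro f₁ f₂ f₃ f₄ _ _ _ _ h
    have e : ∀ f : (Fin 0 → ℝ) → ℝ≥0∞, ∫⁻ x, f x = f 0 := by
      intro f
      rw [lintegral_unique, volume_pi, Measure.pi_univ]
      simp only [Finset.univ_eq_empty, Finset.prod_empty, mul_one]
      exact congrArg f (Subsingleton.elim _ _)
    simpa only [e, inf_idem, sup_idem] using h 0 0
  | succ n ih =>
    intro f₁ f₂ f₃ f₄ h₁ h₂ h₃ h₄ h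
    let e := (MeasurableEquiv.piFinSuccAbove (fun _ : Fin (n + 1) => ℝ) 0).symm
    have hmp : MeasurePreserving e :=
      (volume_preserving_piFinSuccAbove (fun _ : Fin (n + 1) => ℝ) 0).symm _
    have red : ∀ f : (Fin (n + 1) → ℝ) → ℝ≥0∞, Measurable f →
        ∫⁻ x, f x = ∫⁻ z : Fin n → ℝ, ∫⁻ t : ℝ, f (e (t, z)) := by
      intro f hf
      rw [← hmp.lintegral_comp hf, Measure.volume_eq_prod]
      exact lintegral_prod_symm _ (by fun_prop)
    have meas : ∀ f : (Fin (n + 1) → ℝ) → ℝ≥0∞, Measurable f →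
        Measurable fun z : Fin n → ℝ => ∫⁻ t : ℝ, f (e (t, z)) := by
      intro f hf
      exact Measurable.lintegral_prod_left' (f := fun p => f (e p)) (by fun_prop)
    rw [red _ h₁, red _ h₂, red _ h₃, red _ h₄]
    refine ih (meas _ h₁) (meas _ h₂) (meas _ h₃) (meas _ h₄) fun z w => ?_
    refine four_functions_real (by fun_prop) (by fun_prop) (by fun_prop) (by fun_prop)
      fun x y => ?_
    have := h (e (x, z)) (e (y, w))
    have e1 : e (x, z) ⊓ e (y, w) = e (x ⊓ y, z ⊓ w) := by
      ext i
      refine Fin.cases ?_ (fun j => ?_) i <;> simp [e, MeasurableEquiv.piFinSuccAbove]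
    have e2 : e (x, z) ⊔ e (y, w) = e (x ⊔ y, z ⊔ w) := by
      ext i
      refine Fin.cases ?_ (fun j => ?_) i <;> simp [e, MeasurableEquiv.piFinSuccAbove]
    rwa [e1, e2] at this

/-- The Ahlswede–Daykin (four functions) theorem for Lebesgue measure on `ℝ^ι`. -/
theorem four_functions_pi {ι : Type*} [Fintype ι] {f₁ f₂ f₃ f₄ : (ι → ℝ) → ℝ≥0∞}
    (h₁ : Measurable f₁) (h₂ : Measurable f₂) (h₃ : Measurable f₃) (h₄ : Measurable f₄)
    (h : ∀ x y, f₁ x * f₂ y ≤ f₃ (x ⊓ y) * f₄ (x ⊔ y)) :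
    (∫⁻ x, f₁ x) * ∫⁻ x, f₂ x ≤ (∫⁻ x, f₃ x) * ∫⁻ x, f₄ x := by
  let ε := (Fintype.equivFin ι).symm
  let e := MeasurableEquiv.piCongrLeft (fun _ : ι => ℝ) ε
  have hmp : MeasurePreserving e := volume_measurePreserving_piCongrLeft (fun _ : ι => ℝ) ε
  have he : ∀ x i, e x i = x (ε.symm i) := fun x i => by
    obtain ⟨j, rfl⟩ := ε.surjective i
    simp [e, MeasurableEquiv.piCongrLeft, Equiv.piCongrLeft_apply_apply]
  rw [← hmp.lintegral_comp h₁, ← hmp.lintegral_comp h₂, ← hmp.lintegral_comp h₃,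
    ← hmp.lintegral_comp h₄]
  refine four_functions_fin _ (by fun_prop) (by fun_prop) (by fun_prop) (by fun_prop)
    fun x y => ?_
  have e1 : e (x ⊓ y) = e x ⊓ e y := by ext i; simp [he]
  have e2 : e (x ⊔ y) = e x ⊔ e y := by ext i; simp [he]
  rw [e1, e2]
  exact h _ _

/-! ### Monotonicity in the boundary condition -/

section holley

theorem convexOn_of_C2 {V : ℝ → ℝ} {aV : ℝ} (hC2 : ContDiff ℝ 2 V) (haV : 0 < aV)
    (hlb : ∀ x, aV ≤ deriv (deriv V) x) : ConvexOn ℝ Set.univ V := by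
  have hd : Differentiable ℝ V := hC2.differentiable (by norm_num)
  have hd2 : Differentiable ℝ (deriv V) :=
    ((contDiff_succ_iff_deriv (n := 1)).1 hC2).2.2.differentiable (by norm_num)
  refine convexOn_of_deriv2_nonneg' convex_univ hd.differentiableOn hd2.differentiableOn
    fun y _ => ?_
  rw [Function.iterate_succ, Function.iterate_one, Function.comp_apply]
  exact haV.le.trans (hlb y)

/-- For a convex function, moving two points apart with fixed sum increases the sum of values. -/
theorem convex_exchange {V : ℝ → ℝ} (hV : ConvexOn ℝ Set.univ V) {p q r w : ℝ}
    (hpq : p ≤ q) (hqw : q ≤ w) (hsum : q + r = p + w) : V q + V r ≤ V p + V w := by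
  rcases eq_or_lt_of_le (hpq.trans hqw) with h | h
  · have h1 : q = p := by linarith
    have h2 : r = w := by linarith
    rw [h1, h2]
  · have hw : 0 < w - p := by linarith
    have c1 := hV.2 (Set.mem_univ p) (Set.mem_univ w)
      (div_nonneg (by linarith) hw.le : 0 ≤ (w - q) / (w - p))
      (div_nonneg (by linarith) hw.le : 0 ≤ (q - p) / (w - p)) (by field_simp; ring)
    have c2 := hV.2 (Set.mem_univ p) (Set.mem_univ w)
      (div_nonneg (by linarith) hw.le : 0 ≤ (q - p) / (w - p))
      (div_nonneg (by linarith) hw.le : 0 ≤ (w - q) / (w - p)) (by field_simp; ring)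
    simp only [smul_eq_mul] at c1 c2
    rw [show (w - q) / (w - p) * p + (q - p) / (w - p) * w = q by field_simp; ring] at c1
    rw [show (q - p) / (w - p) * p + (w - q) / (w - p) * w = r by
      rw [show r = p + w - q by linarith]; field_simp; ring] at c2
    have e : (w - q) / (w - p) + (q - p) / (w - p) = 1 := by field_simp; ring
    calc V q + V r ≤ _ := add_le_add c1 c2
      _ = ((w - q) / (w - p) + (q - p) / (w - p)) * (V p + V w) := by ring
      _ = _ := by rw [e, one_mul]

/-- The pair interaction `V(y - x)` with `V` convex is submodular in `(x, y)`. -/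
theorem edge_lattice {V : ℝ → ℝ} (hV : ConvexOn ℝ Set.univ V) (x y x' y' : ℝ) :
    V (y ⊓ y' - x ⊓ x') + V (y ⊔ y' - x ⊔ x') ≤ V (y - x) + V (y' - x') := by
  rcases le_total x x' with h1 | h1 <;> rcases le_total y y' with h2 | h2 <;>
    simp only [inf_eq_left.2, inf_eq_right.2, sup_eq_left.2, sup_eq_right.2, h1, h2]
  · rfl
  · rw [add_comm (V (y - x))]
    exact convex_exchange hV (by linarith) (by linarith) (by ring)
  · exact convex_exchange hV (by linarith) (by linarith) (by ring)
  · rw [add_comm]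

theorem edgesOf_finite (F : Finset Z2) : (edgesOf (F : Set Z2)).Finite := by
  refine Set.Finite.subset (Finset.finite_toSet
    (((F ∪ F.image (· - ((1, 0) : Z2)) ∪ F.image (· - ((0, 1) : Z2))) ×ˢ
      ({(1, 0), (0, 1)} : Finset Z2)).image fun p => (p.1, p.1 + p.2))) ?_
  rintro ⟨x, y⟩ ⟨hb, hF⟩
  simp only [Finset.mem_coe, Finset.mem_image, Finset.mem_product, Finset.mem_union,
    Finset.mem_insert, Finset.mem_singleton] at *
  rcases hb with rfl | rfl
  · refine ⟨(x, (1, 0)), ⟨?_, Or.inl rfl⟩, rfl⟩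
    rcases hF with h | h
    · exact Or.inl (Or.inl h)
    · exact Or.inl (Or.inr ⟨_, h, by simp⟩)
  · refine ⟨(x, (0, 1)), ⟨?_, Or.inr rfl⟩, rfl⟩
    rcases hF with h | h
    · exact Or.inl (Or.inl h)
    · exact Or.inr ⟨_, h, by simp⟩

theorem glEnergy_eq_sum (V : ℝ → ℝ) (F : Finset Z2) (φ : Z2 → ℝ) (h : ↥F → ℝ) :
    glEnergy V F φ h = ∑ b ∈ (edgesOf_finite F).toFinset, V (grad (vee F h φ) b) :=
  finsum_mem_eq_finite_toFinset_sum _ _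

theorem edge_ends {F : Finset Z2} {b : Z2 × Z2} (hb : b ∈ edgesOf (F : Set Z2)) :
    (b.1 ∈ F ∨ b.1 ∈ bdry (F : Set Z2)) ∧ (b.2 ∈ F ∨ b.2 ∈ bdry (F : Set Z2)) := by
  obtain ⟨hb1, hb2⟩ := hb
  have hadj : adjZ b.1 b.2 ∧ adjZ b.2 b.1 := by
    rcases hb1 with h | h <;> simp [adjZ, h]
  simp only [Finset.mem_coe] at hb2
  constructor
  · by_cases h : b.1 ∈ F
    · exact Or.inl h
    · exact Or.inr ⟨h, b.2, hb2.resolve_left h, hadj.1⟩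
  · by_cases h : b.2 ∈ F
    · exact Or.inl h
    · exact Or.inr ⟨h, b.1, hb2.resolve_right h, hadj.2⟩

/-- Submodularity of the energy, jointly with ordered boundary conditions on `∂F`. -/
theorem glEnergy_lattice {V : ℝ → ℝ} (hV : ConvexOn ℝ Set.univ V) {F : Finset Z2} {φ φ' : Z2 → ℝ}
    (hφ : ∀ y ∈ bdry (F : Set Z2), φ y ≤ φ' y) (h k : ↥F → ℝ) :
    glEnergy V F φ (h ⊓ k) + glEnergy V F φ' (h ⊔ k) ≤ glEnergy V F φ h + glEnergy V F φ' k := by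
  simp only [glEnergy_eq_sum, ← Finset.sum_add_distrib]
  refine Finset.sum_le_sum fun b hb => ?_
  rw [Set.Finite.mem_toFinset] at hb
  have key : ∀ z, (z ∈ F ∨ z ∈ bdry (F : Set Z2)) →
      vee F (h ⊓ k) φ z = vee F h φ z ⊓ vee F k φ' z ∧
      vee F (h ⊔ k) φ' z = vee F h φ z ⊔ vee F k φ' z := by
    intro z hz
    by_cases hF : z ∈ F
    · simp [vee, hF]
    · have := hφ z (hz.resolve_left hF)
      simp [vee, hF, this]
  obtain ⟨h1, h2⟩ := edge_ends hb
  simp only [grad]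
  rw [(key _ h1).1, (key _ h1).2, (key _ h2).1, (key _ h2).2]
  exact edge_lattice hV _ _ _ _

theorem continuous_glEnergy {V : ℝ → ℝ} (hV : Continuous V) (F : Finset Z2) (φ : Z2 → ℝ) :
    Continuous (glEnergy V F φ) := by
  have : glEnergy V F φ = fun h => ∑ b ∈ (edgesOf_finite F).toFinset, V (grad (vee F h φ) b) :=
    funext fun h => glEnergy_eq_sum V F φ h
  rw [this]
  refine continuous_finsetSum _ fun b _ => hV.comp ?_
  have hv : ∀ z, Continuous fun h : ↥F → ℝ => vee F h φ z := by
    intro z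
    by_cases hz : z ∈ F
    · simp only [vee, hz, dite_true]; fun_prop
    · simp only [vee, hz, dite_false]; fun_prop
  exact (hv _).sub (hv _)

/-- The unnormalised density of the Ginzburg–Landau measure. -/
def glDens (V : ℝ → ℝ) (F : Finset Z2) (φ : Z2 → ℝ) (h : ↥F → ℝ) : ℝ≥0∞ :=
  ENNReal.ofReal (Real.exp (-(glEnergy V F φ h)))

theorem measurable_glDens {V : ℝ → ℝ} (hV : Continuous V) (F : Finset Z2) (φ : Z2 → ℝ) :
    Measurable (glDens V F φ) := by
  have := continuous_glEnergy hV F φ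
  unfold glDens
  fun_prop

theorem glDens_lattice {V : ℝ → ℝ} (hV : ConvexOn ℝ Set.univ V) {F : Finset Z2} {φ φ' : Z2 → ℝ}
    (hφ : ∀ y ∈ bdry (F : Set Z2), φ y ≤ φ' y) (h k : ↥F → ℝ) :
    glDens V F φ h * glDens V F φ' k ≤ glDens V F φ (h ⊓ k) * glDens V F φ' (h ⊔ k) := by
  unfold glDens
  rw [← ENNReal.ofReal_mul (by positivity), ← ENNReal.ofReal_mul (by positivity), ← Real.exp_add,
    ← Real.exp_add]
  refine ENNReal.ofReal_le_ofReal (Real.exp_le_exp.2 ?_)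
  linarith [glEnergy_lattice hV hφ h k]

/-- Monotonicity of the exponential moments of `h(x)` in the boundary condition. -/
theorem holley_exp {V : ℝ → ℝ} (hVc : Continuous V) (hV : ConvexOn ℝ Set.univ V) {F : Finset Z2}
    {φ φ' : Z2 → ℝ} (x : ↥F) {s : ℝ}
    (hs : (0 ≤ s ∧ ∀ y ∈ bdry (F : Set Z2), φ y ≤ φ' y) ∨
      (s ≤ 0 ∧ ∀ y ∈ bdry (F : Set Z2), φ' y ≤ φ y)) :
    (∫⁻ h, ENNReal.ofReal (Real.exp (s * h x)) * glDens V F φ h) * ∫⁻ h, glDens V F φ' h ≤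
      (∫⁻ h, glDens V F φ h) * ∫⁻ h, ENNReal.ofReal (Real.exp (s * h x)) * glDens V F φ' h := by
  have m1 := measurable_glDens hVc F φ
  have m2 := measurable_glDens hVc F φ'
  rcases hs with ⟨hs, hφ⟩ | ⟨hs, hφ⟩
  · refine four_functions_pi (by fun_prop) m2 m1 (by fun_prop) fun h k => ?_
    have hm : ENNReal.ofReal (Real.exp (s * h x)) ≤ ENNReal.ofReal (Real.exp (s * (h ⊔ k) x)) :=
      ENNReal.ofReal_le_ofReal (Real.exp_le_exp.2 (mul_le_mul_of_nonneg_left le_sup_left hs))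
    calc _ = ENNReal.ofReal (Real.exp (s * h x)) * (glDens V F φ h * glDens V F φ' k) := by ring
      _ ≤ ENNReal.ofReal (Real.exp (s * (h ⊔ k) x)) *
          (glDens V F φ (h ⊓ k) * glDens V F φ' (h ⊔ k)) :=
        mul_le_mul' hm (glDens_lattice hV hφ h k)
      _ = _ := by ring
  · rw [mul_comm, mul_comm (∫⁻ h, glDens V F φ h)]
    refine four_functions_pi m2 (by fun_prop) (by fun_prop) m1 fun h k => ?_
    have hm : ENNReal.ofReal (Real.exp (s * k x)) ≤ ENNReal.ofReal (Real.exp (s * (h ⊓ k) x)) :=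
      ENNReal.ofReal_le_ofReal (Real.exp_le_exp.2 (mul_le_mul_of_nonpos_left inf_le_right hs))
    calc _ = ENNReal.ofReal (Real.exp (s * k x)) * (glDens V F φ' h * glDens V F φ k) := by ring
      _ ≤ ENNReal.ofReal (Real.exp (s * (h ⊓ k) x)) *
          (glDens V F φ' (h ⊓ k) * glDens V F φ (h ⊔ k)) :=
        mul_le_mul' hm (glDens_lattice hV hφ h k)
      _ = _ := by ring

theorem glDens_shift (V : ℝ → ℝ) (F : Finset Z2) (φ : Z2 → ℝ) (K : ℝ) (h : ↥F → ℝ) :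
    glDens V F (fun y => φ y + K) (h + fun _ => K) = glDens V F φ h := by
  have hv : ∀ z, vee F (h + fun _ => K) (fun y => φ y + K) z = vee F h φ z + K := by
    intro z
    by_cases hz : z ∈ F <;> simp [vee, hz]
  simp [glDens, glEnergy, grad, hv]

/-- `holley_exp` with the second boundary condition written as `φ + K`, the constant `K` being
moved to the field. -/
theorem compare_exp {V : ℝ → ℝ} (hVc : Continuous V) (hV : ConvexOn ℝ Set.univ V) {F : Finset Z2}
    {φ ζ : Z2 → ℝ} (x : ↥F) {s K : ℝ}
    (hs : (0 ≤ s ∧ ∀ y ∈ bdry (F : Set Z2), ζ y ≤ φ y + K) ∨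
      (s ≤ 0 ∧ ∀ y ∈ bdry (F : Set Z2), φ y + K ≤ ζ y)) :
    (∫⁻ h, ENNReal.ofReal (Real.exp (s * h x)) * glDens V F ζ h) * ∫⁻ h, glDens V F φ h ≤
      (∫⁻ h, glDens V F ζ h) *
        ∫⁻ h, ENNReal.ofReal (Real.exp (s * (h x + K))) * glDens V F φ h := by
  have := holley_exp hVc hV (φ := ζ) (φ' := fun y => φ y + K) x hs
  rw [← lintegral_add_right_eq_self (glDens V F fun y => φ y + K) (fun _ => K),
    ← lintegral_add_right_eq_self
      (fun h : ↥F → ℝ => ENNReal.ofReal (Real.exp (s * h x)) * glDens V F (fun y => φ y + K) h)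
      (fun _ => K)] at this
  simpa only [glDens_shift, Pi.add_apply] using this

end holley

/-! ### Gaussian bounds by duplication -/

/-- Unnormalised exponential integral `∫ exp(-U h + t v(h)) dh`, as an extended nonnegative real. -/
def tiltInt {ι : Type*} [Fintype ι] (U : (ι → ℝ) → ℝ) (v : (ι → ℝ) →ₗ[ℝ] ℝ) (t : ℝ) : ℝ≥0∞ :=
  ∫⁻ h, ENNReal.ofReal (Real.exp (-(U h) + t * v h))

/-- `U` is continuous and its symmetric second differences lie between the forms `q` and `Q`. -/
def Pinched {ι : Type*} [Fintype ι] (q Q : (ι → ℝ) → ℝ) (U : (ι → ℝ) → ℝ) : Prop :=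
  Continuous U ∧ ∀ f g, q g ≤ U (f + g) + U (f - g) - 2 * U f ∧
    U (f + g) + U (f - g) - 2 * U f ≤ Q g

section doubling
variable {ι : Type*} [Fintype ι]

theorem continuous_lin (v : (ι → ℝ) →ₗ[ℝ] ℝ) : Continuous v :=
  LinearMap.continuous_of_finiteDimensional v

/-- The rotation `h = (f + g)/√2`, `k = (f - g)/√2` preserves Lebesgue measure. -/
theorem lintegral_rotation (Φ : (ι → ℝ) → (ι → ℝ) → ℝ≥0∞)
    (hΦ : Measurable (Function.uncurry Φ)) :
    ∫⁻ h, ∫⁻ k, Φ h k =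
      ∫⁻ f : ι → ℝ, ∫⁻ g : ι → ℝ, Φ ((√2)⁻¹ • (f + g)) ((√2)⁻¹ • (f - g)) := by
  have h2 : (√2 : ℝ) ≠ 0 := by positivity
  have hs : (√2 : ℝ) * √2 = 2 := Real.mul_self_sqrt (by norm_num)
  have scale : ∀ {r : ℝ}, 0 < r → ∀ G : (ι → ℝ) → ℝ≥0∞, Measurable G →
      ∫⁻ x, G (r • x) = ENNReal.ofReal ((r ^ Fintype.card ι)⁻¹) * ∫⁻ x, G x := by
    intro r hr G hG
    rw [← lintegral_map (f := G) (g := fun x : ι → ℝ => r • x) hG (by fun_prop)]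
    have := Measure.map_addHaar_smul (volume : Measure (ι → ℝ)) hr.ne'
    rw [this, lintegral_smul_measure, Module.finrank_fintype_fun_eq_card, smul_eq_mul,
      abs_of_nonneg (by positivity)]
  symm
  calc ∫⁻ f : ι → ℝ, ∫⁻ g : ι → ℝ, Φ ((√2)⁻¹ • (f + g)) ((√2)⁻¹ • (f - g))
      = ∫⁻ g : ι → ℝ, ∫⁻ f : ι → ℝ, Φ ((√2)⁻¹ • (f + g)) ((√2)⁻¹ • (f - g)) := by
        apply lintegral_lintegral_swap
        refine Measurable.aemeasurable ?_
        exact hΦ.comp (by fun_prop : Measurable fun p : (ι → ℝ) × (ι → ℝ) =>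
          ((√2)⁻¹ • (p.1 + p.2), (√2)⁻¹ • (p.1 - p.2)))
    _ = ∫⁻ g : ι → ℝ, ∫⁻ f : ι → ℝ, Φ ((√2)⁻¹ • f + √2 • g) ((√2)⁻¹ • f) := by
        refine lintegral_congr fun g => ?_
        rw [← lintegral_add_right_eq_self _ g]
        refine lintegral_congr fun f => ?_
        congr 2
        · ext i
          simp only [Pi.smul_apply, Pi.add_apply, smul_eq_mul]
          field_simp
          linear_combination (-(g i)) * hs
        · ext i; simp
    _ = ∫⁻ g : ι → ℝ, ENNReal.ofReal ((((√2)⁻¹ : ℝ) ^ Fintype.card ι)⁻¹) *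
          ∫⁻ k : ι → ℝ, Φ (k + √2 • g) k := by
        refine lintegral_congr fun g => ?_
        refine scale (r := (√2)⁻¹) (by positivity) (fun k => Φ (k + √2 • g) k) ?_
        exact hΦ.comp (by fun_prop : Measurable fun k : ι → ℝ => (k + √2 • g, k))
    _ = ENNReal.ofReal ((((√2)⁻¹ : ℝ) ^ Fintype.card ι)⁻¹) *
          (ENNReal.ofReal ((((√2) : ℝ) ^ Fintype.card ι)⁻¹) *
          ∫⁻ g : ι → ℝ, ∫⁻ k : ι → ℝ, Φ (k + g) k) := by
        have hmm : Measurable fun g : ι → ℝ => ∫⁻ k : ι → ℝ, Φ (k + g) k :=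
          Measurable.lintegral_prod_right' (f := fun p : (ι → ℝ) × (ι → ℝ) => Φ (p.2 + p.1) p.2)
          (hΦ.comp (by fun_prop : Measurable fun p : (ι → ℝ) × (ι → ℝ) => (p.2 + p.1, p.2)))
        rw [lintegral_const_mul' _ _ ENNReal.ofReal_ne_top]
        congr 1
        exact scale (r := √2) (by positivity) (fun g => ∫⁻ k : ι → ℝ, Φ (k + g) k) hmm
    _ = ∫⁻ g : ι → ℝ, ∫⁻ k : ι → ℝ, Φ (k + g) k := by
        rw [← mul_assoc, ← ENNReal.ofReal_mul (by positivity), ← mul_inv, ← mul_pow,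
          inv_mul_cancel₀ h2]
        simp
    _ = ∫⁻ k : ι → ℝ, ∫⁻ g : ι → ℝ, Φ (k + g) k := by
        apply lintegral_lintegral_swap
        exact (hΦ.comp (by fun_prop : Measurable fun p : (ι → ℝ) × (ι → ℝ) =>
          (p.2 + p.1, p.2))).aemeasurable
    _ = ∫⁻ k : ι → ℝ, ∫⁻ h : ι → ℝ, Φ h k := by
        refine lintegral_congr fun k => ?_
        exact lintegral_add_left_eq_self (fun h => Φ h k) k
    _ = _ := lintegral_lintegral_swap
      (hΦ.comp (by fun_prop : Measurable fun p : (ι → ℝ) × (ι → ℝ) => (p.2, p.1))).aemeasurable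

theorem tiltInt_neg_of_even {U : (ι → ℝ) → ℝ} (hU : ∀ g, U (-g) = U g)
    (v : (ι → ℝ) →ₗ[ℝ] ℝ) (t : ℝ) : tiltInt U v (-t) = tiltInt U v t := by
  unfold tiltInt
  rw [← lintegral_neg_eq_self]
  refine lintegral_congr fun g => ?_
  rw [hU, map_neg]
  ring_nf

variable {q Q : (ι → ℝ) → ℝ} {v : (ι → ℝ) →ₗ[ℝ] ℝ}

/-- Duplication: a Gaussian bound with error `D` for all even pinched potentials improves to one
with error `D / 2` for every pinched potential whose tilted integrals are symmetric in `t`. -/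
theorem tiltInt_step (hq : ∀ (r : ℝ) g, q (r • g) = r ^ 2 * q g)
    (hQ : ∀ (r : ℝ) g, Q (r • g) = r ^ 2 * Q g) {σ D : ℝ}
    (H : ∀ U, Pinched q Q U → (∀ g, U (-g) = U g) → ∀ t,
      tiltInt U v t ≤ ENNReal.ofReal (Real.exp (t ^ 2 * σ + D)) * tiltInt U v 0)
    {U : (ι → ℝ) → ℝ} (hU : Pinched q Q U) (hsym : ∀ t, tiltInt U v (-t) = tiltInt U v t)
    (t : ℝ) :
    tiltInt U v t ≤ ENNReal.ofReal (Real.exp (t ^ 2 * σ + D / 2)) * tiltInt U v 0 := by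
  have hv := continuous_lin v
  have hUc := hU.1
  have hs : (√2 : ℝ) * √2 = 2 := Real.mul_self_sqrt (by norm_num)
  have hs' : ((√2 : ℝ)⁻¹) ^ 2 = 1 / 2 := by
    rw [inv_pow, Real.sq_sqrt (by norm_num)]; norm_num
  -- the conditional potential of the difference variable `g` given the sum variable `f`
  let W : (ι → ℝ) → (ι → ℝ) → ℝ := fun f g => U ((√2)⁻¹ • (f + g)) + U ((√2)⁻¹ • (f - g))
  have hW : ∀ f, Pinched q Q (W f) := by
    intro f
    refine ⟨by fun_prop, fun g k => ?_⟩
    have h1 := hU.2 ((√2)⁻¹ • (f + g)) ((√2)⁻¹ • k)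
    have h2 := hU.2 ((√2)⁻¹ • (f - g)) ((√2)⁻¹ • k)
    rw [hq, hQ, hs', ← smul_add, ← smul_sub] at h1 h2
    have e1 : f + (g + k) = f + g + k := by abel
    have e2 : f - (g + k) = f - g - k := by abel
    have e3 : f + (g - k) = f + g - k := by abel
    have e4 : f - (g - k) = f - g + k := by abel
    simp only [W, e1, e2, e3, e4]
    constructor <;> linarith [h1.1, h1.2, h2.1, h2.2]
  have hWe : ∀ f g, W f (-g) = W f g := by
    intro f g
    simp only [W, ← sub_eq_add_neg, sub_neg_eq_add]
    ring
  have rot : ∀ s, tiltInt U v s * tiltInt U v (-s) = ∫⁻ f, tiltInt (W f) v (√2 * s) := by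
    intro s
    have : tiltInt U v s * tiltInt U v (-s) = ∫⁻ h, ∫⁻ k,
        ENNReal.ofReal (Real.exp (-(U h) + s * v h)) *
          ENNReal.ofReal (Real.exp (-(U k) + -s * v k)) := by
      rw [tiltInt, ← lintegral_mul_const _ (by fun_prop)]
      exact lintegral_congr fun h => (lintegral_const_mul _ (by fun_prop)).symm
    rw [this, lintegral_rotation (fun h k => ENNReal.ofReal (Real.exp (-(U h) + s * v h)) *
          ENNReal.ofReal (Real.exp (-(U k) + -s * v k)))]
    · refine lintegral_congr fun f => lintegral_congr fun g => ?_
      rw [← ENNReal.ofReal_mul (by positivity), ← Real.exp_add]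
      congr 2
      simp only [W, map_smul, map_add, map_sub, smul_eq_mul]
      have h2 : (√2 : ℝ) ≠ 0 := by positivity
      field_simp
      linear_combination (-(s * v g)) * hs
    · unfold Function.uncurry
      fun_prop
  have hmain : tiltInt U v t * tiltInt U v (-t) ≤
      ENNReal.ofReal (Real.exp (t ^ 2 * σ + D / 2)) * tiltInt U v 0 *
      (ENNReal.ofReal (Real.exp (t ^ 2 * σ + D / 2)) * tiltInt U v 0) := by
    have r0 := rot 0
    rw [neg_zero, mul_zero] at r0
    calc tiltInt U v t * tiltInt U v (-t) = ∫⁻ f, tiltInt (W f) v (√2 * t) := rot t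
      _ ≤ ∫⁻ f, ENNReal.ofReal (Real.exp ((√2 * t) ^ 2 * σ + D)) * tiltInt (W f) v 0 :=
        lintegral_mono fun f => H _ (hW f) (hWe f) _
      _ = ENNReal.ofReal (Real.exp ((√2 * t) ^ 2 * σ + D)) *
          (tiltInt U v 0 * tiltInt U v 0) := by
        rw [lintegral_const_mul' _ _ ENNReal.ofReal_ne_top, r0]
      _ = _ := by
        have : (√2 * t) ^ 2 * σ + D = (t ^ 2 * σ + D / 2) + (t ^ 2 * σ + D / 2) := by
          rw [mul_pow, Real.sq_sqrt (by norm_num)]; ring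
        rw [this, Real.exp_add, ENNReal.ofReal_mul (by positivity)]
        ring
  rw [hsym t] at hmain
  -- an inequality between squares in `ℝ≥0∞` passes to the square roots
  by_contra hcon
  push Not at hcon
  exact absurd hmain (not_le.2 (ENNReal.mul_lt_mul hcon hcon))

/-- The bound for even potentials after `n` duplications. The initial error `C` comes from
`U 0 + q / 2 ≤ U ≤ U 0 + Q / 2`, and each duplication halves it. -/
theorem tiltInt_even (hq : ∀ (r : ℝ) g, q (r • g) = r ^ 2 * q g)
    (hQ : ∀ (r : ℝ) g, Q (r • g) = r ^ 2 * Q g) {σ C : ℝ} (hσ : 0 < σ)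
    (hv : ∀ g, v g ^ 2 ≤ σ * q g)
    (hC : ∫⁻ g, ENNReal.ofReal (Real.exp (-(q g / 4))) ≤
      ENNReal.ofReal (Real.exp C) * ∫⁻ g, ENNReal.ofReal (Real.exp (-(Q g / 2))))
    (n : ℕ) :
    ∀ U, Pinched q Q U → (∀ g, U (-g) = U g) → ∀ t,
      tiltInt U v t ≤ ENNReal.ofReal (Real.exp (t ^ 2 * σ + C / 2 ^ n)) * tiltInt U v 0 := by
  induction n with
  | zero =>
    intro U hU he t
    have hb : ∀ g, U 0 + q g / 2 ≤ U g ∧ U g ≤ U 0 + Q g / 2 := by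
      intro g
      have := hU.2 0 g
      rw [zero_add, zero_sub, he] at this
      constructor <;> linarith [this.1, this.2]
    have h1 : ∀ g, -(U g) + t * v g ≤ (-(U 0) + t ^ 2 * σ) + -(q g / 4) := by
      intro g
      have := (hb g).1
      have hvg := hv g
      -- `t v ≤ t²σ + q/4`, since `v² ≤ σ q`
      have : t * v g ≤ t ^ 2 * σ + q g / 4 := by
        have : 0 ≤ (t * σ - v g / 2) ^ 2 := sq_nonneg _
        have h4 : σ * (t * v g) ≤ σ * (t ^ 2 * σ + q g / 4) := by nlinarith
        exact le_of_mul_le_mul_left h4 hσ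
      linarith
    rw [pow_zero, div_one]
    calc tiltInt U v t
        ≤ ∫⁻ g, ENNReal.ofReal (Real.exp (-(U 0) + t ^ 2 * σ)) *
            ENNReal.ofReal (Real.exp (-(q g / 4))) := by
          refine lintegral_mono fun g => ?_
          rw [← ENNReal.ofReal_mul (by positivity), ← Real.exp_add]
          exact ENNReal.ofReal_le_ofReal (Real.exp_le_exp.2 (h1 g))
      _ ≤ ENNReal.ofReal (Real.exp (-(U 0) + t ^ 2 * σ)) * (ENNReal.ofReal (Real.exp C) *
            ∫⁻ g, ENNReal.ofReal (Real.exp (-(Q g / 2)))) := by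
          rw [lintegral_const_mul' _ _ ENNReal.ofReal_ne_top]
          gcongr
      _ = ENNReal.ofReal (Real.exp (t ^ 2 * σ + C)) *
            ∫⁻ g, ENNReal.ofReal (Real.exp (-(U 0))) * ENNReal.ofReal (Real.exp (-(Q g / 2))) := by
          rw [lintegral_const_mul' _ _ ENNReal.ofReal_ne_top, ← mul_assoc, ← mul_assoc,
            ← ENNReal.ofReal_mul (by positivity), ← ENNReal.ofReal_mul (by positivity),
            ← Real.exp_add, ← Real.exp_add]
          ring_nf
      _ ≤ _ := by
          gcongr
          refine lintegral_mono fun g => ?_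
          rw [← ENNReal.ofReal_mul (by positivity), ← Real.exp_add]
          refine ENNReal.ofReal_le_ofReal (Real.exp_le_exp.2 ?_)
          linarith [(hb g).2]
  | succ n ih =>
    intro U hU he t
    have := tiltInt_step hq hQ ih hU (tiltInt_neg_of_even he v) t
    rwa [div_div, ← pow_succ] at this

/-- The duplication error tends to zero, which leaves a Gaussian bound without prefactor.
The potential need not be even: symmetry of the tilted integrals is enough. -/
theorem tiltInt_le (hq : ∀ (r : ℝ) g, q (r • g) = r ^ 2 * q g)
    (hQ : ∀ (r : ℝ) g, Q (r • g) = r ^ 2 * Q g) {σ C : ℝ} (hσ : 0 < σ)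
    (hv : ∀ g, v g ^ 2 ≤ σ * q g)
    (hC : ∫⁻ g, ENNReal.ofReal (Real.exp (-(q g / 4))) ≤
      ENNReal.ofReal (Real.exp C) * ∫⁻ g, ENNReal.ofReal (Real.exp (-(Q g / 2))))
    {U : (ι → ℝ) → ℝ} (hU : Pinched q Q U) (hsym : ∀ t, tiltInt U v (-t) = tiltInt U v t)
    (t : ℝ) :
    tiltInt U v t ≤ ENNReal.ofReal (Real.exp (t ^ 2 * σ)) * tiltInt U v 0 := by
  have hn : ∀ n : ℕ, tiltInt U v t ≤
      ENNReal.ofReal (Real.exp (t ^ 2 * σ + C / 2 ^ n / 2)) * tiltInt U v 0 := fun n =>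
    tiltInt_step hq hQ (tiltInt_even hq hQ hσ hv hC n) hU hsym t
  have h2 : Filter.Tendsto (fun n : ℕ => C / 2 ^ n / 2) Filter.atTop (nhds 0) := by
    have := (tendsto_pow_atTop_nhds_zero_of_lt_one (r := (1 / 2 : ℝ)) (by norm_num)
      (by norm_num)).const_mul (C / 2)
    rw [mul_zero] at this
    refine this.congr fun n => ?_
    rw [one_div, inv_pow]
    ring
  have h3 : Filter.Tendsto (fun n : ℕ =>
      ENNReal.ofReal (Real.exp (t ^ 2 * σ + C / 2 ^ n / 2)) * tiltInt U v 0) Filter.atTop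
      (nhds (ENNReal.ofReal (Real.exp (t ^ 2 * σ + 0)) * tiltInt U v 0)) := by
    refine ENNReal.Tendsto.mul_const ?_ (Or.inl ?_)
    · exact ENNReal.tendsto_ofReal ((Real.continuous_exp.tendsto _).comp (h2.const_add _))
    · simpa using Real.exp_pos _
  rw [add_zero] at h3
  exact ge_of_tendsto' h3 hn
end doubling

/-! ### The tilted torus -/

/-- The discrete torus of side `2 ^ n`. -/
abbrev Tor (n : ℕ) := ZMod (2 ^ n) × ZMod (2 ^ n)

section torus
variable {n : ℕ}

/-- The discrete Dirichlet energy on the torus. -/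
def dirE (h : Tor n → ℝ) : ℝ :=
  ∑ t, ((h (t + (1, 0)) - h t) ^ 2 + (h (t + (0, 1)) - h t) ^ 2)

/-- The Hamiltonian on the torus with tilt `u`. -/
def torH (V : ℝ → ℝ) (u : ℝ × ℝ) (h : Tor n → ℝ) : ℝ :=
  ∑ t, (V (h (t + (1, 0)) - h t + u.1) + V (h (t + (0, 1)) - h t + u.2))

/-- The spatial average over the torus, as a linear functional. -/
def avg (n : ℕ) : (Tor n → ℝ) →ₗ[ℝ] ℝ :=
  ((2 ^ n * 2 ^ n : ℝ)⁻¹) • ∑ t, LinearMap.proj t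

theorem avg_apply (h : Tor n → ℝ) : avg n h = (2 ^ n * 2 ^ n : ℝ)⁻¹ * ∑ t, h t := by
  simp [avg, LinearMap.sum_apply]

/-- The average of `h` over the box of side `L` with corner `x`. -/
def boxAvg (h : Tor n → ℝ) (L : ℕ) (x : Tor n) : ℝ :=
  ((L : ℝ) ^ 2)⁻¹ * ∑ i ∈ Finset.range L, ∑ j ∈ Finset.range L,
    h (x + ((i : ZMod (2 ^ n)), (j : ZMod (2 ^ n))))

/-- A box of side at most `2 ^ n` does not wrap around the torus. -/
theorem box_injOn {L : ℕ} (hL : L ≤ 2 ^ n) (y : Tor n) :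
    Set.InjOn (fun p : ℕ × ℕ => y + ((p.1 : ZMod (2 ^ n)), (p.2 : ZMod (2 ^ n))))
      (Finset.range L ×ˢ Finset.range L : Finset (ℕ × ℕ)) := by
  rintro ⟨i, j⟩ hp ⟨i', j'⟩ hp' h
  simp only [Finset.coe_product, Finset.coe_range, Set.mem_prod, Set.mem_Iio] at hp hp'
  have h' := add_left_cancel h
  rw [Prod.mk.injEq] at h'
  have key : ∀ a b : ℕ, a < L → b < L → (a : ZMod (2 ^ n)) = b → a = b := by
    intro a b ha hb hab
    rw [ZMod.natCast_eq_natCast_iff', Nat.mod_eq_of_lt (ha.trans_le hL),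
      Nat.mod_eq_of_lt (hb.trans_le hL)] at hab
    exact hab
  rw [key i i' hp.1 hp'.1 h'.1, key j j' hp.2 hp'.2 h'.2]

/-- Moving a box of side `L` by `L` steps changes the average by a sum of `L` gradients, each
averaged over `L²` sites; Cauchy–Schwarz then makes the powers of `L` cancel. This is where
dimension two enters. -/
theorem boxAvg_shift (h : Tor n → ℝ) {L : ℕ} (hL0 : 0 < L) (hL : L ≤ 2 ^ n) (x e : Tor n) :
    (boxAvg h L (x + L • e) - boxAvg h L x) ^ 2 ≤ ∑ t, (h (t + e) - h t) ^ 2 := by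
  set E := ∑ t, (h (t + e) - h t) ^ 2
  let s := Finset.range L ×ˢ Finset.range L
  let c : ℕ × ℕ → Tor n := fun p => ((p.1 : ZMod (2 ^ n)), (p.2 : ZMod (2 ^ n)))
  let d : Tor n → ℝ := fun t => h (t + e) - h t
  have hLr : (0 : ℝ) < L := by exact_mod_cast hL0
  have e1 : boxAvg h L (x + L • e) - boxAvg h L x =
      ((L : ℝ) ^ 2)⁻¹ * ∑ r ∈ Finset.range L ×ˢ s, d (x + r.1 • e + c r.2) := by
    rw [Finset.sum_product, Finset.sum_comm]
    unfold boxAvg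
    rw [← mul_sub, ← Finset.sum_product', ← Finset.sum_product', ← Finset.sum_sub_distrib]
    congr 1
    refine Finset.sum_congr rfl fun p _ => ?_
    have := Finset.sum_range_sub (fun k => h (x + k • e + c p)) L
    simp only [zero_smul, add_zero] at this
    rw [← this]
    refine Finset.sum_congr rfl fun k _ => ?_
    simp only [d]
    congr 2
    rw [succ_nsmul]; abel
  have e2 : (∑ r ∈ Finset.range L ×ˢ s, d (x + r.1 • e + c r.2)) ^ 2 ≤ (L : ℝ) ^ 4 * E := by
    have h1 := sq_sum_le_card_mul_sum_sq (s := Finset.range L ×ˢ s)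
      (f := fun r => d (x + r.1 • e + c r.2))
    have h2 : ∑ r ∈ Finset.range L ×ˢ s, d (x + r.1 • e + c r.2) ^ 2 ≤ L * E := by
      rw [Finset.sum_product]
      calc _ ≤ ∑ k ∈ Finset.range L, E := by
            refine Finset.sum_le_sum fun k _ => ?_
            rw [← Finset.sum_image (f := fun t => d t ^ 2) (g := fun p => x + k • e + c p)
              (box_injOn hL _)]
            exact Finset.sum_le_sum_of_subset_of_nonneg (Finset.subset_univ _)
              fun _ _ _ => sq_nonneg _
        _ = L * E := by simp
    have h3 : ((Finset.range L ×ˢ s).card : ℝ) = (L : ℝ) ^ 3 := by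
      simp [s]; ring
    rw [h3] at h1
    calc _ ≤ _ := h1
      _ ≤ (L : ℝ) ^ 3 * (L * E) := by gcongr
      _ = _ := by ring
  rw [e1, mul_pow]
  calc _ ≤ (((L : ℝ) ^ 2)⁻¹) ^ 2 * ((L : ℝ) ^ 4 * E) := by gcongr
    _ = E := by field_simp

theorem boxAvg_double (h : Tor n → ℝ) {L : ℕ} (hL0 : 0 < L) (x : Tor n) :
    boxAvg h (L + L) x = (boxAvg h L x + boxAvg h L (x + L • (1, 0)) + boxAvg h L (x + L • (0, 1)) +
      boxAvg h L (x + L • (1, 0) + L • (0, 1))) / 4 := by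
  have hLr : (0 : ℝ) < L := by exact_mod_cast hL0
  unfold boxAvg
  simp only [Finset.sum_range_add, Finset.sum_add_distrib]
  have e : ∀ a b : ZMod (2 ^ n), x + L • ((1, 0) : Tor n) + (a, b) = x + (L + a, b) ∧
      x + L • ((0, 1) : Tor n) + (a, b) = x + (a, L + b) ∧
      x + L • ((1, 0) : Tor n) + L • ((0, 1) : Tor n) + (a, b) = x + (L + a, L + b) := by
    intro a b
    refine ⟨?_, ?_, ?_⟩ <;> ext <;> simp <;> ring
  simp only [fun a b => (e a b).2.2]
  simp only [fun a b => (e a b).1, fun a b => (e a b).2.1]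
  push_cast
  field_simp
  ring

theorem dirE_nonneg (h : Tor n → ℝ) : 0 ≤ dirE h := by unfold dirE; positivity

/-- Each doubling of the box costs one square root of the Dirichlet energy. -/
theorem boxAvg_step (h : Tor n → ℝ) {L : ℕ} (hL0 : 0 < L) (hL : L ≤ 2 ^ n) (x : Tor n) :
    |boxAvg h (L + L) x - boxAvg h L x| ≤ √(dirE h) := by
  have b1 : ∀ y, |boxAvg h L (y + L • (1, 0)) - boxAvg h L y| ≤ √(dirE h) := fun y =>
    Real.abs_le_sqrt ((boxAvg_shift h hL0 hL y (1, 0)).trans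
      (Finset.sum_le_sum fun t _ => le_add_of_nonneg_right (sq_nonneg _)))
  have b2 : ∀ y, |boxAvg h L (y + L • (0, 1)) - boxAvg h L y| ≤ √(dirE h) := fun y =>
    Real.abs_le_sqrt ((boxAvg_shift h hL0 hL y (0, 1)).trans
      (Finset.sum_le_sum fun t _ => le_add_of_nonneg_left (sq_nonneg _)))
  have h1 := abs_le.1 (b1 x)
  have h2 := abs_le.1 (b2 x)
  have h3 := abs_le.1 (b2 (x + L • (1, 0)))
  rw [boxAvg_double h hL0, abs_le]
  constructor <;> linarith [h1.1, h1.2, h2.1, h2.2, h3.1, h3.2]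

theorem boxAvg_multi (h : Tor n → ℝ) (x : Tor n) (m : ℕ) (hm : m ≤ n) :
    |boxAvg h (2 ^ m) x - h x| ≤ m * √(dirE h) := by
  induction m with
  | zero => simp [boxAvg, show x + ((0, 0) : Tor n) = x from add_zero x]
  | succ m ih =>
    have h1 := boxAvg_step h (L := 2 ^ m) (by positivity)
      (Nat.pow_le_pow_right (by norm_num) (by lia)) x
    have h2 := ih (by lia)
    rw [← two_mul, ← pow_succ'] at h1
    push_cast
    calc _ ≤ |boxAvg h (2 ^ (m + 1)) x - boxAvg h (2 ^ m) x| + |boxAvg h (2 ^ m) x - h x| :=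
          abs_sub_le _ _ _
      _ ≤ _ := by linarith

theorem boxAvg_full (h : Tor n → ℝ) (x : Tor n) : boxAvg h (2 ^ n) x = avg n h := by
  have hu : (Finset.range (2 ^ n) ×ˢ Finset.range (2 ^ n)).image
      (fun p : ℕ × ℕ => x + ((p.1 : ZMod (2 ^ n)), (p.2 : ZMod (2 ^ n)))) = Finset.univ := by
    apply Finset.eq_univ_of_card
    rw [Finset.card_image_of_injOn (box_injOn le_rfl x)]
    simp [ZMod.card]
  rw [avg_apply, boxAvg, ← Finset.sum_product', ← hu, Finset.sum_image (box_injOn le_rfl x)]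
  push_cast
  rw [sq]

/-- Logarithmic bound: in dimension two a point value differs from the mean by at most `n`, the
binary logarithm of the side, times the square root of the Dirichlet energy. -/
theorem sq_sub_avg_le (h : Tor n → ℝ) (x : Tor n) : (h x - avg n h) ^ 2 ≤ n ^ 2 * dirE h := by
  have := boxAvg_multi h x n le_rfl
  rw [boxAvg_full, abs_sub_comm] at this
  calc _ = |h x - avg n h| ^ 2 := (sq_abs _).symm
    _ ≤ (n * √(dirE h)) ^ 2 := by gcongr
    _ = _ := by rw [mul_pow, Real.sq_sqrt (dirE_nonneg h)]

theorem second_diff {V : ℝ → ℝ} {aV AV : ℝ} (hC2 : ContDiff ℝ 2 V)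
    (hlb : ∀ x, aV ≤ deriv (deriv V) x) (hub : ∀ x, deriv (deriv V) x ≤ AV) (x d : ℝ) :
    aV * d ^ 2 ≤ V (x + d) + V (x - d) - 2 * V x ∧
      V (x + d) + V (x - d) - 2 * V x ≤ AV * d ^ 2 := by
  have hd : Differentiable ℝ V := hC2.differentiable (by norm_num)
  have hd2 : Differentiable ℝ (deriv V) :=
    ((contDiff_succ_iff_deriv (n := 1)).1 hC2).2.2.differentiable (by norm_num)
  -- midpoint convexity of `c V + (b / 2) y²`, to be used with `(c, b) = (1, -a_V)` and `(-1, A_V)`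
  have conv : ∀ c b : ℝ, (∀ y, 0 ≤ c * deriv (deriv V) y + b) →
      0 ≤ c * (V (x + d) + V (x - d) - 2 * V x) + b * d ^ 2 := by
    intro c b hcb
    let f : ℝ → ℝ := fun y => c * V y + b / 2 * y ^ 2
    have d1 : ∀ y, HasDerivAt f (c * deriv V y + b * y) y := by
      intro y
      have := ((hd y).hasDerivAt.const_mul c).add (((hasDerivAt_id y).pow 2).const_mul (b / 2))
      refine this.congr_deriv ?_
      simp; ring
    have e1 : deriv f = fun y => c * deriv V y + b * y := funext fun y => (d1 y).deriv
    have d2 : ∀ y, HasDerivAt (deriv f) (c * deriv (deriv V) y + b) y := by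
      intro y
      rw [e1]
      have := ((hd2 y).hasDerivAt.const_mul c).add ((hasDerivAt_id y).const_mul b)
      refine this.congr_deriv ?_
      simp
    have hf : ConvexOn ℝ Set.univ f := by
      refine convexOn_of_deriv2_nonneg' convex_univ
        (fun y _ => (d1 y).differentiableAt.differentiableWithinAt)
        (fun y _ => (d2 y).differentiableAt.differentiableWithinAt) fun y _ => ?_
      rw [Function.iterate_succ, Function.iterate_one, Function.comp_apply, (d2 y).deriv]
      exact hcb y
    have := hf.2 (Set.mem_univ (x + d)) (Set.mem_univ (x - d))
      (by norm_num : (0 : ℝ) ≤ 1 / 2) (by norm_num : (0 : ℝ) ≤ 1 / 2) (by norm_num)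
    simp only [smul_eq_mul] at this
    rw [show 1 / 2 * (x + d) + 1 / 2 * (x - d) = x by ring] at this
    simp only [f] at this
    nlinarith
  have h1 := conv 1 (-aV) fun y => by linarith [hlb y]
  have h2 := conv (-1) AV fun y => by linarith [hub y]
  constructor <;> linarith

/-- The quadratic form `c ∑ |∇g|² + (avg g)²`. -/
def quadF (c : ℝ) (g : Tor n → ℝ) : ℝ := c * dirE g + avg n g ^ 2

theorem quadF_smul (c r : ℝ) (g : Tor n → ℝ) : quadF c (r • g) = r ^ 2 * quadF c g := by
  have : dirE (r • g) = r ^ 2 * dirE g := by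
    unfold dirE
    rw [Finset.mul_sum]
    refine Finset.sum_congr rfl fun t _ => ?_
    simp only [Pi.smul_apply, smul_eq_mul]
    ring
  rw [quadF, quadF, this, map_smul, smul_eq_mul]
  ring

/-- The torus potential with the zero mode fixed softly by a Gaussian weight on the average. -/
def torU (V : ℝ → ℝ) (u : ℝ × ℝ) (h : Tor n → ℝ) : ℝ := torH V u h + avg n h ^ 2 / 2

theorem continuous_torH {V : ℝ → ℝ} (hV : Continuous V) (u : ℝ × ℝ) :
    Continuous (torH (n := n) V u) := by
  unfold torH
  fun_prop

theorem torU_pinched {V : ℝ → ℝ} {aV AV : ℝ} (hC2 : ContDiff ℝ 2 V)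
    (hlb : ∀ x, aV ≤ deriv (deriv V) x) (hub : ∀ x, deriv (deriv V) x ≤ AV) (u : ℝ × ℝ) :
    Pinched (quadF (n := n) aV) (quadF AV) (torU V u) := by
  have hsd := second_diff hC2 hlb hub
  have := hC2.continuous
  have hc := continuous_lin (avg n)
  have hc' := continuous_torH (n := n) this u
  refine ⟨by unfold torU; fun_prop, fun f g => ?_⟩
  have e : torU V u (f + g) + torU V u (f - g) - 2 * torU V u f =
      (torH V u (f + g) + torH V u (f - g) - 2 * torH V u f) + avg n g ^ 2 := by
    simp only [torU, map_add, map_sub]; ring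
  have e' : torH V u (f + g) + torH V u (f - g) - 2 * torH V u f =
      ∑ t, ((V ((f (t + (1, 0)) - f t + u.1) + (g (t + (1, 0)) - g t)) +
          V ((f (t + (1, 0)) - f t + u.1) - (g (t + (1, 0)) - g t)) -
          2 * V (f (t + (1, 0)) - f t + u.1)) +
        (V ((f (t + (0, 1)) - f t + u.2) + (g (t + (0, 1)) - g t)) +
          V ((f (t + (0, 1)) - f t + u.2) - (g (t + (0, 1)) - g t)) -
          2 * V (f (t + (0, 1)) - f t + u.2))) := by
    unfold torH
    rw [Finset.mul_sum, ← Finset.sum_add_distrib, ← Finset.sum_sub_distrib]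
    refine Finset.sum_congr rfl fun t _ => ?_
    simp only [Pi.add_apply, Pi.sub_apply]
    ring_nf
  rw [e, e', quadF, quadF, dirE, Finset.mul_sum, Finset.mul_sum]
  constructor
  · gcongr with t
    rw [mul_add]
    exact add_le_add (hsd _ _).1 (hsd _ _).1
  · gcongr with t
    rw [mul_add]
    exact add_le_add (hsd _ _).2 (hsd _ _).2

theorem sq_le_quadF {a : ℝ} (ha : 0 < a) (g : Tor n → ℝ) (x : Tor n) :
    g x ^ 2 ≤ (2 * n ^ 2 / a + 2) * quadF a g := by
  have h1 := sq_sub_avg_le g x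
  have h2 : g x ^ 2 ≤ 2 * (g x - avg n g) ^ 2 + 2 * avg n g ^ 2 := by
    nlinarith [sq_nonneg (g x - 2 * avg n g)]
  have h3 := dirE_nonneg g
  have e : (2 * n ^ 2 / a + 2) * quadF a g = 2 * (n ^ 2 * dirE g) + 2 * avg n g ^ 2 +
      (2 * n ^ 2 / a * avg n g ^ 2 + 2 * (a * dirE g)) := by
    unfold quadF; field_simp; ring
  have h4 : 0 ≤ 2 * n ^ 2 / a * avg n g ^ 2 + 2 * (a * dirE g) := by positivity
  linarith

theorem lintegral_quadF_lt_top {a : ℝ} (ha : 0 < a) :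
    ∫⁻ g : Tor n → ℝ, ENNReal.ofReal (Real.exp (-(quadF a g / 4))) < ⊤ := by
  set K : ℝ := 2 * n ^ 2 / a + 2
  have hK : 0 < K := by positivity
  set m : ℝ := ((Fintype.card (Tor n) : ℕ) : ℝ)
  have hm : 0 < m := by
    exact Nat.cast_pos.2 Fintype.card_pos
  -- `quadF a` dominates a positive multiple of `∑ g t ^ 2`
  have hi : Integrable fun g : Tor n → ℝ => ∏ t, Real.exp (-(1 / (4 * m * K)) * g t ^ 2) :=
    Integrable.fintype_prod fun _ => integrable_exp_neg_mul_sq (by positivity)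
  refine lt_of_le_of_lt (lintegral_mono fun g => ENNReal.ofReal_le_ofReal ?_) hi.lintegral_lt_top
  rw [← Real.exp_sum, Real.exp_le_exp, ← Finset.mul_sum, neg_mul, neg_le_neg_iff]
  have : ∑ t, g t ^ 2 ≤ m * (K * quadF a g) := by
    calc _ ≤ ∑ _t : Tor n, K * quadF a g := Finset.sum_le_sum fun t _ => sq_le_quadF ha g t
      _ = _ := by simp [m]
  calc 1 / (4 * m * K) * ∑ t, g t ^ 2 ≤ 1 / (4 * m * K) * (m * (K * quadF a g)) := by gcongr
    _ = _ := by field_simp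

/-- Some finite constant compares the two Gaussian integrals; its size is irrelevant, as duplication
removes it. -/
theorem exists_quadF_const {a : ℝ} (ha : 0 < a) (A : ℝ) : ∃ C : ℝ,
    ∫⁻ g : Tor n → ℝ, ENNReal.ofReal (Real.exp (-(quadF a g / 4))) ≤
      ENNReal.ofReal (Real.exp C) *
        ∫⁻ g : Tor n → ℝ, ENNReal.ofReal (Real.exp (-(quadF A g / 2))) := by
  set X := ∫⁻ g : Tor n → ℝ, ENNReal.ofReal (Real.exp (-(quadF a g / 4)))
  set Y := ∫⁻ g : Tor n → ℝ, ENNReal.ofReal (Real.exp (-(quadF A g / 2)))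
  have hX : X ≠ ⊤ := (lintegral_quadF_lt_top ha).ne
  have hY : Y ≠ 0 := by
    have hc := continuous_lin (avg n)
    have : Measurable fun g : Tor n → ℝ => ENNReal.ofReal (Real.exp (-(quadF A g / 2))) := by
      unfold quadF dirE
      fun_prop
    rw [Ne, lintegral_eq_zero_iff this]
    intro h
    obtain ⟨g, hg⟩ := h.exists
    simp only [Pi.zero_apply, ENNReal.ofReal_eq_zero] at hg
    exact absurd (Real.exp_pos _) (not_lt.2 hg)
  rcases eq_or_ne Y ⊤ with hY' | hY'
  · refine ⟨0, ?_⟩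
    rw [hY']
    simp
  · refine ⟨(X / Y).toReal, ?_⟩
    have hXY : X / Y ≠ ⊤ := ENNReal.div_ne_top hX hY
    calc X = X / Y * Y := (ENNReal.div_mul_cancel hY hY').symm
      _ ≤ _ := by
        gcongr
        rw [← ENNReal.ofReal_toReal hXY]
        apply ENNReal.ofReal_le_ofReal
        rw [ENNReal.ofReal_toReal hXY]
        linarith [Real.add_one_le_exp (X / Y).toReal]

/-- The linear functional `h ↦ h(x) - avg h`. -/
def dev (x : Tor n) : (Tor n → ℝ) →ₗ[ℝ] ℝ := LinearMap.proj x - avg n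

theorem dev_apply (x : Tor n) (h : Tor n → ℝ) : dev x h = h x - avg n h := by simp [dev]

/-- The point reflection `h ↦ -h(2x - ·)` preserves the torus measure and flips the sign of
`h(x) - avg h`. -/
theorem tiltInt_torU_neg (V : ℝ → ℝ) (hV : Continuous V) (u : ℝ × ℝ) (x : Tor n) (s : ℝ) :
    tiltInt (torU V u) (dev x) (-s) = tiltInt (torU V u) (dev x) s := by
  let ε : Tor n ≃ Tor n := Equiv.subLeft (x + x)
  let e := MeasurableEquiv.piCongrLeft (fun _ : Tor n => ℝ) ε
  have hmp : MeasurePreserving e := volume_measurePreserving_piCongrLeft (fun _ : Tor n => ℝ) ε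
  have he : ∀ h t, e h t = h (x + x - t) := fun h t => by
    obtain ⟨j, rfl⟩ := ε.surjective t
    have h1 : e h (ε j) = h j := Equiv.piCongrLeft_apply_apply (fun _ => ℝ) ε h j
    rw [h1]
    simp [ε]
  have hc := continuous_lin (avg n)
  have hc' := continuous_lin (dev x)
  have hc'' := continuous_torH (n := n) hV u
  have avg_e : ∀ h, avg n (-e h) = -avg n h := by
    intro h
    rw [map_neg, avg_apply, avg_apply, ← Equiv.sum_comp ε h]
    simp [he, ε]
  have dev_e : ∀ h, dev x (-e h) = -dev x h := by
    intro h
    rw [dev_apply, dev_apply, avg_e, Pi.neg_apply, he, add_sub_cancel_right]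
    ring
  have H_e : ∀ h, torH V u (-e h) = torH V u h := by
    intro h
    simp only [torH, Pi.neg_apply, he, Finset.sum_add_distrib]
    congr 1
    · rw [← Equiv.sum_comp (Equiv.subLeft (x + x - (1, 0)))]
      refine Finset.sum_congr rfl fun t _ => ?_
      simp only [Equiv.subLeft_apply]
      congr 1
      rw [show x + x - (x + x - (1, 0) - t + (1, 0)) = t by abel,
        show x + x - (x + x - (1, 0) - t) = t + (1, 0) by abel]
      ring
    · rw [← Equiv.sum_comp (Equiv.subLeft (x + x - (0, 1)))]
      refine Finset.sum_congr rfl fun t _ => ?_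
      simp only [Equiv.subLeft_apply]
      congr 1
      rw [show x + x - (x + x - (0, 1) - t + (0, 1)) = t by abel,
        show x + x - (x + x - (0, 1) - t) = t + (0, 1) by abel]
      ring
  unfold tiltInt
  rw [← lintegral_neg_eq_self, ← hmp.lintegral_comp]
  · refine lintegral_congr fun h => ?_
    simp only [torU]
    rw [H_e, avg_e, dev_e]
    ring_nf
  · unfold torU
    fun_prop

/-- Gaussian exponential moments of `h(x) - avg h` on the torus, uniformly in the tilt, with
variance proxy of order `n² = (log₂ side)²`. -/
theorem torus_exp_moment {V : ℝ → ℝ} {aV AV : ℝ} (hC2 : ContDiff ℝ 2 V) (haV : 0 < aV)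
    (hlb : ∀ x, aV ≤ deriv (deriv V) x) (hub : ∀ x, deriv (deriv V) x ≤ AV) (u : ℝ × ℝ)
    (x : Tor n) (s : ℝ) :
    tiltInt (torU V u) (dev x) s ≤
      ENNReal.ofReal (Real.exp (s ^ 2 * ((n ^ 2 + 1) / aV))) * tiltInt (torU V u) (dev x) 0 := by
  obtain ⟨C, hC⟩ := exists_quadF_const (n := n) haV AV
  refine tiltInt_le (quadF_smul aV) (quadF_smul AV) (by positivity) (fun g => ?_) hC
    (torU_pinched hC2 hlb hub u) (tiltInt_torU_neg V hC2.continuous u x) s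
  rw [dev_apply]
  refine (sq_sub_avg_le g x).trans ?_
  have h3 := dirE_nonneg g
  have e : (n ^ 2 + 1) / aV * quadF aV g = n ^ 2 * dirE g +
      (dirE g + (n ^ 2 + 1) / aV * avg n g ^ 2) := by
    unfold quadF; field_simp; ring
  rw [e]
  have : 0 ≤ dirE g + (n ^ 2 + 1) / aV * avg n g ^ 2 := by positivity
  linarith

end torus

/-! ### Change of pinning -/

section pinning
variable {n : ℕ}

/-- The unnormalised standard Gaussian weight. -/
def gw (x : ℝ) : ℝ≥0∞ := ENNReal.ofReal (Real.exp (-(x ^ 2 / 2)))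

theorem measurable_gw : Measurable gw := by unfold gw; fun_prop

theorem gw_int_ne_zero : ∫⁻ x, gw x ≠ 0 := by
  rw [Ne, lintegral_eq_zero_iff measurable_gw]
  intro h
  obtain ⟨g, hg⟩ := h.exists
  simp only [gw, Pi.zero_apply, ENNReal.ofReal_eq_zero] at hg
  exact absurd (Real.exp_pos _) (not_lt.2 hg)

theorem gw_int_ne_top : ∫⁻ x, gw x ≠ ⊤ := by
  have : Integrable fun x : ℝ => Real.exp (-(1 / 2) * x ^ 2) :=
    integrable_exp_neg_mul_sq (by norm_num)
  have h := this.lintegral_lt_top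
  refine ne_of_lt (lt_of_le_of_lt (le_of_eq ?_) h)
  refine lintegral_congr fun x => ?_
  unfold gw
  congr 3
  ring

/-- For a functional invariant under adding constants, it does not matter which normalised linear
functional carries the Gaussian weight that fixes the zero mode. -/
theorem repin {ι : Type*} [Fintype ι] (G : (ι → ℝ) → ℝ≥0∞) (hG : Measurable G)
    (hshift : ∀ h (c : ℝ), G (h + fun _ => c) = G h) (l m : (ι → ℝ) →ₗ[ℝ] ℝ)
    (hl : l (fun _ => 1) = 1) (hm : m (fun _ => 1) = 1) :
    ∫⁻ h, G h * gw (l h) = ∫⁻ h, G h * gw (m h) := by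
  have hlc := (continuous_lin l).measurable
  have hmc := (continuous_lin m).measurable
  have hgw := measurable_gw
  have hconst : ∀ (f : (ι → ℝ) →ₗ[ℝ] ℝ), f (fun _ => 1) = 1 → ∀ c : ℝ, f (fun _ => c) = c := by
    intro f hf c
    have : (fun _ : ι => c) = c • (fun _ : ι => (1 : ℝ)) := by ext; simp
    rw [this, map_smul, hf, smul_eq_mul, mul_one]
  -- multiply by the integral of a Gaussian centred at `- m h`, then translate `h` by constants to
  -- exchange the roles of `l` and `m`
  have key : (∫⁻ h, G h * gw (l h)) * ∫⁻ x, gw x = (∫⁻ h, G h * gw (m h)) * ∫⁻ x, gw x := by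
    calc (∫⁻ h, G h * gw (l h)) * ∫⁻ x, gw x
        = ∫⁻ h, ∫⁻ t, G h * gw (l h) * gw (t + m h) := by
          rw [← lintegral_mul_const _ (by fun_prop)]
          refine lintegral_congr fun h => ?_
          rw [lintegral_const_mul _ (by fun_prop), lintegral_add_right_eq_self]
      _ = ∫⁻ t, ∫⁻ h, G h * gw (l h) * gw (t + m h) :=
          lintegral_lintegral_swap (by unfold Function.uncurry; fun_prop)
      _ = ∫⁻ t, ∫⁻ h, G h * gw (t - l h) * gw (m h) := by
          refine lintegral_congr fun t => ?_
          rw [← lintegral_add_right_eq_self _ (fun _ => -t)]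
          refine lintegral_congr fun h => ?_
          rw [hshift, map_add, map_add, hconst l hl, hconst m hm]
          have : gw (l h + -t) = gw (t - l h) := by unfold gw; congr 3; ring
          rw [this]
          congr 2
          ring
      _ = ∫⁻ h, ∫⁻ t, G h * gw (t - l h) * gw (m h) :=
          lintegral_lintegral_swap (by unfold Function.uncurry; fun_prop)
      _ = _ := by
          rw [← lintegral_mul_const _ (by fun_prop)]
          refine lintegral_congr fun h => ?_
          rw [lintegral_mul_const _ (by fun_prop), lintegral_const_mul _ (by fun_prop),
            lintegral_sub_right_eq_self]
          ring
  exact (ENNReal.mul_left_inj gw_int_ne_zero gw_int_ne_top).1 key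

theorem torH_shift (V : ℝ → ℝ) (u : ℝ × ℝ) (h : Tor n → ℝ) (c : ℝ) :
    torH V u (h + fun _ => c) = torH V u h := by
  simp [torH]

/-- Exponential moments of height differences on the torus pinned softly at `o`: passing to the
pinning by the average, `e^{s (h x - h y)}` is split by `a b ≤ a² + b²` into the deviations at `x`
and `y`. -/
theorem pinned_exp_moment {V : ℝ → ℝ} {aV AV : ℝ} (hC2 : ContDiff ℝ 2 V) (haV : 0 < aV)
    (hlb : ∀ x, aV ≤ deriv (deriv V) x) (hub : ∀ x, deriv (deriv V) x ≤ AV) (u : ℝ × ℝ)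
    (o x y : Tor n) (s : ℝ) :
    ∫⁻ h : Tor n → ℝ, ENNReal.ofReal (Real.exp (s * (h x - h y))) *
        ENNReal.ofReal (Real.exp (-(torH V u h))) * gw (h o) ≤
      2 * ENNReal.ofReal (Real.exp (4 * s ^ 2 * ((n ^ 2 + 1) / aV))) *
        ∫⁻ h : Tor n → ℝ, ENNReal.ofReal (Real.exp (-(torH V u h))) * gw (h o) := by
  have hc := continuous_lin (avg n)
  have hcH := continuous_torH (n := n) hC2.continuous u
  have hcx := continuous_lin (dev x)
  have hcy := continuous_lin (dev y)
  have havg : avg n (fun _ => 1) = 1 := by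
    rw [avg_apply]
    simp only [Finset.sum_const, Finset.card_univ, Fintype.card_prod, ZMod.card, nsmul_eq_mul]
    push_cast
    field_simp
  have hU : ∀ (v : (Tor n → ℝ) →ₗ[ℝ] ℝ) (r : ℝ) h,
      ENNReal.ofReal (Real.exp (-(torU V u h) + r * v h)) = ENNReal.ofReal (Real.exp (r * v h)) *
        (ENNReal.ofReal (Real.exp (-(torH V u h))) * gw (avg n h)) := by
    intro v r h
    rw [gw, ← ENNReal.ofReal_mul (by positivity), ← ENNReal.ofReal_mul (by positivity),
      ← Real.exp_add, ← Real.exp_add, torU]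
    ring_nf
  have e0 : ∫⁻ h : Tor n → ℝ, ENNReal.ofReal (Real.exp (-(torH V u h))) * gw (h o) =
      ∫⁻ h : Tor n → ℝ, ENNReal.ofReal (Real.exp (-(torH V u h))) * gw (avg n h) :=
    repin _ (by fun_prop) (fun h c => by rw [torH_shift]) (LinearMap.proj o) (avg n)
      (by simp) havg
  have e1 : ∫⁻ h : Tor n → ℝ, ENNReal.ofReal (Real.exp (s * (h x - h y))) *
        ENNReal.ofReal (Real.exp (-(torH V u h))) * gw (h o) =
      ∫⁻ h : Tor n → ℝ, ENNReal.ofReal (Real.exp (s * (h x - h y))) *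
        ENNReal.ofReal (Real.exp (-(torH V u h))) * gw (avg n h) :=
    repin (fun h : Tor n → ℝ => ENNReal.ofReal (Real.exp (s * (h x - h y))) *
        ENNReal.ofReal (Real.exp (-(torH V u h)))) (by fun_prop)
        (fun h c => by rw [torH_shift]; simp) (LinearMap.proj o) (avg n)
      (by simp) havg
  have hz : ∀ v : (Tor n → ℝ) →ₗ[ℝ] ℝ, tiltInt (torU V u) v 0 =
      ∫⁻ h : Tor n → ℝ, ENNReal.ofReal (Real.exp (-(torH V u h))) * gw (avg n h) := by
    intro v
    unfold tiltInt
    refine lintegral_congr fun h => ?_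
    rw [hU]
    simp
  rw [e0, e1]
  have hx := torus_exp_moment hC2 haV hlb hub u x (2 * s)
  have hy := torus_exp_moment hC2 haV hlb hub u y (-(2 * s))
  rw [hz] at hx hy
  calc _ ≤ ∫⁻ h : Tor n → ℝ, (ENNReal.ofReal (Real.exp (-(torU V u h) + 2 * s * dev x h)) +
          ENNReal.ofReal (Real.exp (-(torU V u h) + -(2 * s) * dev y h))) := by
        refine lintegral_mono fun h => ?_
        rw [hU, hU, ← add_mul, mul_assoc, ← ENNReal.ofReal_add (by positivity) (by positivity)]
        gcongr
        have p1 := Real.exp_pos (s * dev x h)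
        have p2 := Real.exp_pos (-(s * dev y h))
        have q1 : Real.exp (2 * s * dev x h) = Real.exp (s * dev x h) ^ 2 := by
          rw [← Real.exp_nat_mul]; push_cast; ring_nf
        have q2 : Real.exp (-(2 * s) * dev y h) = Real.exp (-(s * dev y h)) ^ 2 := by
          rw [← Real.exp_nat_mul]; push_cast; ring_nf
        have q3 : Real.exp (s * (h x - h y)) =
            Real.exp (s * dev x h) * Real.exp (-(s * dev y h)) := by
          rw [← Real.exp_add, dev_apply, dev_apply]; ring_nf
        rw [q1, q2, q3]
        nlinarith [sq_nonneg (Real.exp (s * dev x h) - Real.exp (-(s * dev y h)))]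
    _ = tiltInt (torU V u) (dev x) (2 * s) + tiltInt (torU V u) (dev y) (-(2 * s)) := by
        rw [lintegral_add_left]
        · rfl
        · unfold torU
          fun_prop
    _ ≤ _ := by
        refine (add_le_add hx hy).trans (le_of_eq ?_)
        rw [neg_sq, ← two_mul, mul_pow, mul_assoc 2]
        norm_num

end pinning

/-! ### The partition function of the torus -/

section partition_function
variable {n : ℕ}

theorem pinned_ne_zero {V : ℝ → ℝ} (hVc : Continuous V) (u : ℝ × ℝ) (o : Tor n) :
    ∫⁻ h : Tor n → ℝ, ENNReal.ofReal (Real.exp (-(torH V u h))) * gw (h o) ≠ 0 := by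
  have hcH := continuous_torH (n := n) hVc u
  have hgw := measurable_gw
  rw [Ne, lintegral_eq_zero_iff (by fun_prop)]
  intro h
  obtain ⟨g, hg⟩ := h.exists
  simp only [gw, Pi.zero_apply, mul_eq_zero, ENNReal.ofReal_eq_zero] at hg
  rcases hg with hg | hg <;> exact absurd (Real.exp_pos _) (not_lt.2 hg)

/-- Finiteness follows from `V(d + w) ≥ V 0 - (a_V / 2) w² + (a_V / 4) d²`, which uses
that `V` is even. -/
theorem pinned_ne_top {V : ℝ → ℝ} {aV AV : ℝ} (hC2 : ContDiff ℝ 2 V) (hsym : ∀ x, V (-x) = V x)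
    (haV : 0 < aV) (hlb : ∀ x, aV ≤ deriv (deriv V) x) (hub : ∀ x, deriv (deriv V) x ≤ AV)
    (u : ℝ × ℝ) (o : Tor n) :
    ∫⁻ h : Tor n → ℝ, ENNReal.ofReal (Real.exp (-(torH V u h))) * gw (h o) ≠ ⊤ := by
  have hc := continuous_lin (avg n)
  have hcH := continuous_torH (n := n) hC2.continuous u
  have havg : avg n (fun _ => 1) = 1 := by
    rw [avg_apply]
    simp only [Finset.sum_const, Finset.card_univ, Fintype.card_prod, ZMod.card, nsmul_eq_mul]
    push_cast
    field_simp
  have e0 : ∫⁻ h : Tor n → ℝ, ENNReal.ofReal (Real.exp (-(torH V u h))) * gw (h o) =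
      ∫⁻ h : Tor n → ℝ, ENNReal.ofReal (Real.exp (-(torH V u h))) * gw (avg n h) :=
    repin _ (by fun_prop) (fun h c => by rw [torH_shift]) (LinearMap.proj o) (avg n)
      (by simp) havg
  rw [e0]
  have hV : ∀ d w, V 0 - aV / 2 * w ^ 2 + aV / 4 * d ^ 2 ≤ V (d + w) := by
    intro d w
    have h1 := (second_diff hC2 hlb hub 0 (d + w)).1
    rw [zero_add, zero_sub, hsym] at h1
    nlinarith [sq_nonneg (d + 2 * w)]
  set C : ℝ := ∑ _t : Tor n, (2 * V 0 - aV / 2 * (u.1 ^ 2 + u.2 ^ 2)) with hC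
  have hlow : ∀ h : Tor n → ℝ, C + quadF aV h / 4 ≤ torH V u h + avg n h ^ 2 / 2 := by
    intro h
    have h1 : C + aV / 4 * dirE h ≤ torH V u h := by
      rw [hC, dirE, torH, Finset.mul_sum, ← Finset.sum_add_distrib]
      refine Finset.sum_le_sum fun t _ => ?_
      linarith [hV (h (t + (1, 0)) - h t) u.1, hV (h (t + (0, 1)) - h t) u.2]
    unfold quadF
    nlinarith [sq_nonneg (avg n h)]
  refine ne_of_lt (lt_of_le_of_lt (b := ENNReal.ofReal (Real.exp (-C)) *
    ∫⁻ g : Tor n → ℝ, ENNReal.ofReal (Real.exp (-(quadF aV g / 4)))) ?_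
    (ENNReal.mul_lt_top ENNReal.ofReal_lt_top (lintegral_quadF_lt_top haV)))
  rw [← lintegral_const_mul' _ _ ENNReal.ofReal_ne_top]
  refine lintegral_mono fun h => ?_
  rw [gw, ← ENNReal.ofReal_mul (by positivity), ← ENNReal.ofReal_mul (by positivity),
    ← Real.exp_add, ← Real.exp_add]
  refine ENNReal.ofReal_le_ofReal (Real.exp_le_exp.2 ?_)
  linarith [hlow h]

end partition_function

/-! ### Embedding into the torus and the spatial Markov property -/

section embedding
variable {n : ℕ}

/-- Reduction of `ℤ²` modulo `2 ^ n`. -/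
def toTor (n : ℕ) (z : Z2) : Tor n := ((z.1 : ZMod (2 ^ n)), (z.2 : ZMod (2 ^ n)))

theorem toTor_add (z w : Z2) : toTor n (z + w) = toTor n z + toTor n w := by
  simp [toTor]

/-- The affine function `z ↦ u · z`. -/
def tilt (u : ℝ × ℝ) (z : Z2) : ℝ := u.1 * (z.1 : ℝ) + u.2 * (z.2 : ℝ)

/-- `F` together with its boundary embeds into the torus. -/
def Embeds (n : ℕ) (F : Finset Z2) : Prop :=
  Set.InjOn (toTor n) ((F : Set Z2) ∪ bdry (F : Set Z2))

theorem Embeds.notMem {F : Finset Z2} (hF : Embeds n F) {y : Z2} (hy : y ∈ bdry (F : Set Z2)) :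
    toTor n y ∉ F.image (toTor n) := by
  intro h
  obtain ⟨x, hx, hxy⟩ := Finset.mem_image.1 h
  have := hF (Or.inl hx) (Or.inr hy) hxy
  exact hy.1 (this ▸ hx)

/-- The bijection between `F` and its image in the torus. -/
def Embeds.equiv {F : Finset Z2} (hF : Embeds n F) : ↥F ≃ ↥(F.image (toTor n)) :=
  Equiv.ofBijective (fun x => ⟨toTor n x, Finset.mem_image_of_mem _ x.2⟩) (by
    constructor
    · intro x y hxy
      exact Subtype.ext (hF (Or.inl x.2) (Or.inl y.2) (congrArg Subtype.val hxy))
    · rintro ⟨t, ht⟩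
      obtain ⟨x, hx, hxt⟩ := Finset.mem_image.1 ht
      exact ⟨⟨x, hx⟩, Subtype.ext hxt⟩)

/-- The torus configuration equal to the tilt-corrected field `h - u · x` on the image of `F` and
to `k` elsewhere. -/
def glue {F : Finset Z2} (hF : Embeds n F) (u : ℝ × ℝ) (k : Tor n → ℝ) (h : ↥F → ℝ) : Tor n → ℝ :=
  Function.updateFinset k (F.image (toTor n)) fun t =>
    h (hF.equiv.symm t) - tilt u (hF.equiv.symm t)

variable {F : Finset Z2} (hF : Embeds n F)

theorem glue_mem (u : ℝ × ℝ) (k : Tor n → ℝ) (h : ↥F → ℝ) {x : Z2} (hx : x ∈ F) :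
    glue hF u k h (toTor n x) = h ⟨x, hx⟩ - tilt u x := by
  have hm : toTor n x ∈ F.image (toTor n) := Finset.mem_image_of_mem _ hx
  have : hF.equiv.symm ⟨toTor n x, hm⟩ = ⟨x, hx⟩ := by
    rw [Equiv.symm_apply_eq]
    rfl
  simp only [glue, Function.updateFinset, hm, dite_true, this]

theorem glue_notMem (u : ℝ × ℝ) (k : Tor n → ℝ) (h : ↥F → ℝ) {t : Tor n}
    (ht : t ∉ F.image (toTor n)) : glue hF u k h t = k t := by
  simp only [glue, Function.updateFinset, ht, dite_false]

/-- Integrating out the coordinates in the image of `F` amounts to integrating over fields on `F`,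
the shift by the tilt being absorbed by translation invariance. -/
theorem lmarginal_glue (u : ℝ × ℝ) (k : Tor n → ℝ) (f : (Tor n → ℝ) → ℝ≥0∞) :
    (∫⋯∫⁻_F.image (toTor n), f ∂(fun _ => volume)) k = ∫⁻ h : ↥F → ℝ, f (glue hF u k h) := by
  have e := volume_measurePreserving_piCongrLeft (fun _ : ↥(F.image (toTor n)) => ℝ) hF.equiv
  rw [lmarginal, ← volume_pi, ← e.lintegral_comp_emb (MeasurableEquiv.measurableEmbedding _),
    ← lintegral_sub_right_eq_self _ (fun x : ↥F => tilt u x)]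
  refine lintegral_congr fun h => ?_
  congr 1
  unfold glue
  congr 1
  ext t
  obtain ⟨x, rfl⟩ := hF.equiv.surjective t
  rw [MeasurableEquiv.coe_piCongrLeft, Equiv.piCongrLeft_apply_apply]
  simp

/-- The boundary condition induced on `F` by a torus configuration. -/
def bcOf (u : ℝ × ℝ) (k : Tor n → ℝ) (y : Z2) : ℝ := k (toTor n y) + tilt u y

theorem vee_bcOf (u : ℝ × ℝ) (k : Tor n → ℝ) (h : ↥F → ℝ) {y : Z2}
    (hy : y ∈ F ∨ y ∈ bdry (F : Set Z2)) :
    vee F h (bcOf u k) y = glue hF u k h (toTor n y) + tilt u y := by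
  by_cases hyF : y ∈ F
  · rw [glue_mem hF u k h hyF]
    simp [vee, hyF]
  · rw [glue_notMem hF u k h (hF.notMem (hy.resolve_left hyF))]
    simp [vee, hyF, bcOf]

/-- The contribution of one torus edge (base point and direction) to the Hamiltonian. -/
def edgeTerm (V : ℝ → ℝ) (u : ℝ × ℝ) (g : Tor n → ℝ) (e : Tor n × Bool) : ℝ :=
  if e.2 then V (g (e.1 + (1, 0)) - g e.1 + u.1) else V (g (e.1 + (0, 1)) - g e.1 + u.2)

theorem torH_eq_edges (V : ℝ → ℝ) (u : ℝ × ℝ) (g : Tor n → ℝ) :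
    torH V u g = ∑ e, edgeTerm V u g e := by
  rw [Fintype.sum_prod_type]
  simp [torH, edgeTerm]

/-- The torus edge under an oriented edge of `ℤ²`. -/
def edgeTo (n : ℕ) (b : Z2 × Z2) : Tor n × Bool :=
  (toTor n b.1, decide (b.2 = b.1 + ((1, 0) : Z2)))

/-- The energy of a configuration carried by the torus edges not coming from `F`. -/
def restH (V : ℝ → ℝ) (F : Finset Z2) (u : ℝ × ℝ) (k : Tor n → ℝ) : ℝ :=
  ∑ e ∈ ((edgesOf_finite F).toFinset.image (edgeTo n))ᶜ, edgeTerm V u k e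

theorem toTor_e1 : toTor n ((1, 0) : Z2) = (1, 0) := by simp [toTor]

theorem toTor_e2 : toTor n ((0, 1) : Z2) = (0, 1) := by simp [toTor]

theorem ne_e2 (z : Z2) : z + ((0, 1) : Z2) ≠ z + ((1, 0) : Z2) := by
  intro h
  have := add_left_cancel h
  simp at this

/-- Spatial Markov property of the torus Hamiltonian. -/
theorem torH_glue (V : ℝ → ℝ) (u : ℝ × ℝ) (k : Tor n → ℝ) (h : ↥F → ℝ) :
    torH V u (glue hF u k h) = glEnergy V F (bcOf u k) h + restH V F u k := by
  rw [torH_eq_edges, ← Finset.sum_add_sum_compl ((edgesOf_finite F).toFinset.image (edgeTo n))]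
  congr 1
  · rw [glEnergy_eq_sum, Finset.sum_image]
    · refine Finset.sum_congr rfl fun b hb => ?_
      rw [Set.Finite.mem_toFinset] at hb
      obtain ⟨h1, h2⟩ := edge_ends hb
      rw [grad, vee_bcOf hF u k h h1, vee_bcOf hF u k h h2]
      rcases b with ⟨x, y⟩
      rcases hb.1 with hxy | hxy <;> simp only at hxy <;> subst hxy
      · simp only [edgeTerm, edgeTo, toTor_add, toTor_e1, decide_true, if_true, tilt]
        congr 1
        simp only [Prod.fst_add, Prod.snd_add]
        push_cast
        ring
      · simp only [edgeTerm, edgeTo, toTor_add, toTor_e2, ne_e2, decide_false, tilt]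
        simp only [Prod.fst_add, Prod.snd_add, Bool.false_eq_true, if_false]
        congr 1
        push_cast
        ring
    · rintro ⟨x, y⟩ hb ⟨x', y'⟩ hb' heq
      simp only [Set.Finite.coe_toFinset] at hb hb'
      simp only [edgeTo, Prod.mk.injEq, decide_eq_decide] at heq
      have hx : x = x' := hF (edge_ends hb).1 (edge_ends hb').1 heq.1
      subst hx
      refine Prod.ext rfl ?_
      rcases hb.1 with h1 | h1 <;> rcases hb'.1 with h2 | h2 <;> simp only at h1 h2 ⊢
      · rw [h1, h2]
      · rw [heq.2.1 h1, h1]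
      · rw [heq.2.2 h2, h2]
      · rw [h1, h2]
  · refine Finset.sum_congr rfl fun e he => ?_
    rw [Finset.mem_compl, Finset.mem_image] at he
    push Not at he
    simp only [Set.Finite.mem_toFinset] at he
    rcases e with ⟨t, i⟩
    have h1 : t ∉ F.image (toTor n) := by
      intro ht
      obtain ⟨z, hz, rfl⟩ := Finset.mem_image.1 ht
      cases i
      · exact he (z, z + ((0, 1) : Z2)) ⟨Or.inr rfl, Or.inl hz⟩ (by simp [edgeTo])
      · exact he (z, z + ((1, 0) : Z2)) ⟨Or.inl rfl, Or.inl hz⟩ (by simp [edgeTo])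
    cases i
    · have h2 : t + (0, 1) ∉ F.image (toTor n) := by
        intro ht
        obtain ⟨z, hz, hzt⟩ := Finset.mem_image.1 ht
        refine he (z - ((0, 1) : Z2), z) ⟨Or.inr (by simp), Or.inr hz⟩ ?_
        have : toTor n (z - ((0, 1) : Z2)) = t := by
          rw [← add_left_inj (toTor n ((0, 1) : Z2)), ← toTor_add, sub_add_cancel, hzt, toTor_e2]
        have hne := ne_e2 (z - ((0, 1) : Z2))
        rw [sub_add_cancel] at hne
        simp only [edgeTo, this, hne, decide_false]
      simp only [edgeTerm, Bool.false_eq_true, if_false, glue_notMem hF u k h h1,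
        glue_notMem hF u k h h2]
    · have h2 : t + (1, 0) ∉ F.image (toTor n) := by
        intro ht
        obtain ⟨z, hz, hzt⟩ := Finset.mem_image.1 ht
        refine he (z - ((1, 0) : Z2), z) ⟨Or.inl (by simp), Or.inr hz⟩ ?_
        have : toTor n (z - ((1, 0) : Z2)) = t := by
          rw [← add_left_inj (toTor n ((1, 0) : Z2)), ← toTor_add, sub_add_cancel, hzt, toTor_e1]
        simp [edgeTo, this]
      simp only [edgeTerm, if_true, glue_notMem hF u k h h1, glue_notMem hF u k h h2]

end embedding

/-! ### Transfer from the torus to `F` -/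

section transfer
variable {n : ℕ}

theorem bdry_finite (F : Finset Z2) : (bdry (F : Set Z2)).Finite := by
  refine Set.Finite.subset (Finset.finite_toSet
    ((F ×ˢ (Finset.Icc (-1) 1 ×ˢ Finset.Icc (-1) 1 : Finset Z2)).image fun p => p.1 + p.2)) ?_
  rintro x ⟨_, y, hy, hxy⟩
  simp only [Finset.mem_coe, Finset.mem_image, Finset.mem_product, Finset.mem_Icc]
  unfold adjZ at hxy
  refine ⟨(y, x - y), ⟨hy, ?_⟩, by simp⟩
  simp only [Prod.fst_sub, Prod.snd_sub]
  refine ⟨⟨?_, ?_⟩, ?_, ?_⟩ <;> nlinarith [sq_nonneg (x.1 - y.1), sq_nonneg (x.2 - y.2)]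

theorem bdry_nonempty {F : Finset Z2} (hF : F.Nonempty) : (bdry (F : Set Z2)).Nonempty := by
  obtain ⟨x, hx, hmax⟩ := F.exists_max_image (fun z => z.1) hF
  refine ⟨x + ((1, 0) : Z2), fun h => ?_, x, hx, by simp [adjZ]⟩
  have := hmax _ h
  simp at this

/-- The comparison for a fixed torus configuration `k` off the image of `F`: the boundary
condition `ζ` lies below (for `s ≥ 0`) or above (for `s ≤ 0`) the one induced by `k` shifted by a
constant, namely `± L` minus the value of `k` at an extremal boundary site. As this site is unknown,
the bound sums over all torus sites. -/
theorem compare_glue {V : ℝ → ℝ} (hVc : Continuous V) (hV : ConvexOn ℝ Set.univ V) {F : Finset Z2}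
    (hF : Embeds n F) (u : ℝ × ℝ) {ζ : Z2 → ℝ} {L : ℝ}
    (hL : ∀ y ∈ bdry (F : Set Z2), |ζ y - tilt u y| ≤ L) (k : Tor n → ℝ) (x : ↥F) (s : ℝ) :
    (∫⁻ h, ENNReal.ofReal (Real.exp (s * (h x - tilt u x))) * glDens V F ζ h) *
        ∫⁻ h, glDens V F (bcOf u k) h ≤
      (∫⁻ h, glDens V F ζ h) * ∫⁻ h, ENNReal.ofReal (Real.exp (|s| * L)) *
        (∑ t, ENNReal.ofReal (Real.exp (s * (glue hF u k h (toTor n x) - glue hF u k h t)))) *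
          glDens V F (bcOf u k) h := by
  obtain ⟨y0, K, hy0, hK, hs⟩ : ∃ y0 K, y0 ∈ bdry (F : Set Z2) ∧
      s * K = |s| * L - s * k (toTor n y0) ∧
      ((0 ≤ s ∧ ∀ y ∈ bdry (F : Set Z2), ζ y ≤ bcOf u k y + K) ∨
      (s ≤ 0 ∧ ∀ y ∈ bdry (F : Set Z2), bcOf u k y + K ≤ ζ y)) := by
    have hne := bdry_nonempty ⟨x.1, x.2⟩
    rcases le_total 0 s with hs | hs
    · obtain ⟨y0, hy0, hmin⟩ := Set.exists_min_image _ (fun y => k (toTor n y)) (bdry_finite F) hne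
      refine ⟨y0, L - k (toTor n y0), hy0, by rw [abs_of_nonneg hs]; ring,
        Or.inl ⟨hs, fun y hy => ?_⟩⟩
      unfold bcOf
      linarith [hmin y hy, (abs_le.1 (hL y hy)).2]
    · obtain ⟨y0, hy0, hmax⟩ := Set.exists_max_image _ (fun y => k (toTor n y)) (bdry_finite F) hne
      refine ⟨y0, -L - k (toTor n y0), hy0, by rw [abs_of_nonpos hs]; ring,
        Or.inr ⟨hs, fun y hy => ?_⟩⟩
      unfold bcOf
      linarith [hmax y hy, (abs_le.1 (hL y hy)).1]
  have key := compare_exp hVc hV (φ := bcOf u k) (ζ := ζ) x hs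
  have m1 := measurable_glDens hVc F ζ
  have e1 : ∫⁻ h, ENNReal.ofReal (Real.exp (s * (h x - tilt u x))) * glDens V F ζ h =
      ENNReal.ofReal (Real.exp (-(s * tilt u x))) *
        ∫⁻ h, ENNReal.ofReal (Real.exp (s * h x)) * glDens V F ζ h := by
    rw [← lintegral_const_mul _ (by fun_prop)]
    refine lintegral_congr fun h => ?_
    rw [← mul_assoc, ← ENNReal.ofReal_mul (by positivity), ← Real.exp_add]
    ring_nf
  rw [e1, mul_assoc]
  refine (mul_le_mul_right key _).trans ?_
  rw [mul_left_comm, ← lintegral_const_mul' _ _ ENNReal.ofReal_ne_top]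
  refine mul_le_mul_right (lintegral_mono fun h => ?_) _
  rw [← mul_assoc]
  refine mul_le_mul_left ?_ _
  refine le_trans (le_of_eq ?_) (mul_le_mul_right (Finset.single_le_sum
    (f := fun t => ENNReal.ofReal (Real.exp (s * (glue hF u k h (toTor n x) - glue hF u k h t))))
    (fun _ _ => zero_le) (Finset.mem_univ (toTor n y0))) _)
  rw [glue_mem hF u k h x.2, glue_notMem hF u k h (hF.notMem hy0),
    ← ENNReal.ofReal_mul (by positivity), ← ENNReal.ofReal_mul (by positivity), ← Real.exp_add,
    ← Real.exp_add]
  congr 2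
  simp only [Subtype.coe_eta]
  linear_combination hK

/-- Exponential moments of the tilt-corrected height under the GL measure, in unnormalised form. -/
theorem gl_exp_moment {V : ℝ → ℝ} {aV AV : ℝ} (hC2 : ContDiff ℝ 2 V) (hsym : ∀ x, V (-x) = V x)
    (haV : 0 < aV) (hlb : ∀ x, aV ≤ deriv (deriv V) x) (hub : ∀ x, deriv (deriv V) x ≤ AV)
    {F : Finset Z2} (hF : Embeds n F) (u : ℝ × ℝ) {ζ : Z2 → ℝ} {L : ℝ}
    (hL : ∀ y ∈ bdry (F : Set Z2), |ζ y - tilt u y| ≤ L) (x : ↥F) (s : ℝ) :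
    ∫⁻ h, ENNReal.ofReal (Real.exp (s * (h x - tilt u x))) * glDens V F ζ h ≤
      ENNReal.ofReal (2 * 4 ^ n * Real.exp (|s| * L + 4 * s ^ 2 * ((n ^ 2 + 1) / aV))) *
        ∫⁻ h, glDens V F ζ h := by
  have hVc := hC2.continuous
  have hV := convexOn_of_C2 hC2 haV hlb
  obtain ⟨y0, hy0⟩ := bdry_nonempty (F := F) ⟨x.1, x.2⟩
  set o := toTor n y0 with ho
  have ho' : o ∉ F.image (toTor n) := hF.notMem hy0
  set A := ∫⁻ h, ENNReal.ofReal (Real.exp (s * (h x - tilt u x))) * glDens V F ζ h with hA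
  set B := ∫⁻ h, glDens V F ζ h with hB
  set W : (Tor n → ℝ) → ℝ≥0∞ := fun g => ENNReal.ofReal (Real.exp (-(torH V u g))) * gw (g o)
    with hW
  set S : (Tor n → ℝ) → ℝ≥0∞ := fun g => ENNReal.ofReal (Real.exp (|s| * L)) *
    ∑ t, ENNReal.ofReal (Real.exp (s * (g (toTor n x) - g t))) with hS
  have hcH := continuous_torH (n := n) hVc u
  have hgw := measurable_gw
  have mW : Measurable W := by fun_prop
  have mS : Measurable S := by fun_prop
  have hWk : ∀ k h, W (glue hF u k h) =
      ENNReal.ofReal (Real.exp (-(restH V F u k))) * gw (k o) * glDens V F (bcOf u k) h := by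
    intro k h
    simp only [hW, glDens]
    rw [torH_glue, glue_notMem hF u k h ho', neg_add, Real.exp_add,
      ENNReal.ofReal_mul (by positivity)]
    ring
  -- integrate out the sites in the image of `F` first, with the configuration `k` outside fixed
  have step : ∫⁻ g, A * W g ≤ ∫⁻ g, B * (S g * W g) := by
    refine lintegral_le_of_lmarginal_le (F.image (toTor n)) (by fun_prop) (by fun_prop) fun k => ?_
    rw [lmarginal_glue hF u, lmarginal_glue hF u]
    have m2 := measurable_glDens hVc F (bcOf u k)
    have hc : ENNReal.ofReal (Real.exp (-(restH V F u k))) * gw (k o) ≠ ⊤ :=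
      ENNReal.mul_ne_top ENNReal.ofReal_ne_top ENNReal.ofReal_ne_top
    set c := ENNReal.ofReal (Real.exp (-(restH V F u k))) * gw (k o) with hcdef
    have mS' : Measurable fun h => S (glue hF u k h) := by
      refine mS.comp (measurable_pi_lambda _ fun t => ?_)
      by_cases ht : t ∈ F.image (toTor n)
      · obtain ⟨z, hz, rfl⟩ := Finset.mem_image.1 ht
        simp only [glue_mem hF u k _ hz]
        fun_prop
      · simp only [glue_notMem hF u k _ ht]
        fun_prop
    simp only [hWk]
    calc ∫⁻ h, A * (c * glDens V F (bcOf u k) h) = c * (A * ∫⁻ h, glDens V F (bcOf u k) h) := by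
          rw [lintegral_const_mul _ (by fun_prop), lintegral_const_mul _ m2]
          ring
      _ ≤ c * (B * ∫⁻ h, S (glue hF u k h) * glDens V F (bcOf u k) h) :=
          mul_le_mul_right (compare_glue hVc hV hF u hL k x s) _
      _ = ∫⁻ h, B * (S (glue hF u k h) * (c * glDens V F (bcOf u k) h)) := by
          have mSc : Measurable fun h => S (glue hF u k h) * (c * glDens V F (bcOf u k) h) :=
            mS'.mul (m2.const_mul c)
          rw [lintegral_const_mul _ mSc, mul_left_comm, ← lintegral_const_mul' _ _ hc]
          congr 1
          refine lintegral_congr fun h => ?_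
          ring
  rw [lintegral_const_mul _ mW, lintegral_const_mul _ (by fun_prop)] at step
  have hSW : ∫⁻ g, S g * W g ≤
      ENNReal.ofReal (2 * 4 ^ n * Real.exp (|s| * L + 4 * s ^ 2 * ((n ^ 2 + 1) / aV))) *
        ∫⁻ g, W g := by
    calc ∫⁻ g, S g * W g = ENNReal.ofReal (Real.exp (|s| * L)) *
          ∑ t, ∫⁻ g, ENNReal.ofReal (Real.exp (s * (g (toTor n x) - g t))) *
            ENNReal.ofReal (Real.exp (-(torH V u g))) * gw (g o) := by
          rw [← lintegral_finsetSum _ (fun t _ => by fun_prop),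
            ← lintegral_const_mul' _ _ ENNReal.ofReal_ne_top]
          refine lintegral_congr fun g => ?_
          simp only [hS, hW, mul_assoc, Finset.sum_mul]
      _ ≤ ENNReal.ofReal (Real.exp (|s| * L)) * ∑ _t : Tor n,
          2 * ENNReal.ofReal (Real.exp (4 * s ^ 2 * ((n ^ 2 + 1) / aV))) * ∫⁻ g, W g := by
          gcongr with t
          exact pinned_exp_moment hC2 haV hlb hub u o _ t s
      _ = _ := by
          simp only [Finset.sum_const, Finset.card_univ, Fintype.card_prod, ZMod.card, nsmul_eq_mul]
          rw [Real.exp_add, ENNReal.ofReal_mul (by positivity), ENNReal.ofReal_mul (by positivity),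
            ENNReal.ofReal_mul (by positivity), ENNReal.ofReal_pow (by positivity)]
          have : ENNReal.ofReal 4 = 2 * 2 := by norm_num
          rw [this, ENNReal.ofReal_ofNat, mul_pow]
          push_cast
          ring
  have hZ0 := pinned_ne_zero (n := n) hVc u o
  have hZt := pinned_ne_top (n := n) hC2 hsym haV hlb hub u o
  rw [← ENNReal.mul_le_mul_iff_left hZ0 hZt]
  refine step.trans ((mul_le_mul_right hSW B).trans (le_of_eq ?_))
  simp only [hW]
  ring

end transfer

/-! ### Moments under the GL measure -/

section moments
variable {n : ℕ}

theorem lintegral_IsGL {V : ℝ → ℝ} (hVc : Continuous V) {F : Finset Z2} {ζ : Z2 → ℝ}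
    {P : Measure (↥F → ℝ)} (hP : IsGL V F ζ P) {f : (↥F → ℝ) → ℝ≥0∞} (hf : Measurable f) {C : ℝ≥0∞}
    (h : ∫⁻ h, f h * glDens V F ζ h ≤ C * ∫⁻ h, glDens V F ζ h) : ∫⁻ h, f h ∂P ≤ C := by
  obtain ⟨hprob, c, -, -, rfl⟩ := hP
  have m := measurable_glDens hVc F ζ
  have e : ∀ g : (↥F → ℝ) → ℝ≥0∞, Measurable g →
      ∫⁻ h, g h ∂(c • glFree V F ζ) = c * ∫⁻ h, g h * glDens V F ζ h := by
    intro g hg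
    rw [lintegral_smul_measure, smul_eq_mul]
    congr 1
    change ∫⁻ h, g h ∂(volume.withDensity (glDens V F ζ)) = _
    rw [lintegral_withDensity_eq_lintegral_mul _ m hg]
    refine lintegral_congr fun h => ?_
    rw [Pi.mul_apply, mul_comm]
  have h1 := e (fun _ => 1) measurable_const
  simp only [lintegral_one, measure_univ, one_mul] at h1
  calc _ = c * ∫⁻ h, f h * glDens V F ζ h := e f hf
    _ ≤ c * (C * ∫⁻ h, glDens V F ζ h) := mul_le_mul_right h _
    _ = C * (c * ∫⁻ h, glDens V F ζ h) := by ring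
    _ = C := by rw [← h1, mul_one]

/-- All moments of the tilt-corrected height, at any scale `D` dominating both the boundary
fluctuation `L` and the torus standard deviation. -/
theorem gl_moment {V : ℝ → ℝ} {aV AV : ℝ} (hC2 : ContDiff ℝ 2 V) (hsym : ∀ x, V (-x) = V x)
    (haV : 0 < aV) (hlb : ∀ x, aV ≤ deriv (deriv V) x) (hub : ∀ x, deriv (deriv V) x ≤ AV)
    {F : Finset Z2} (hF : Embeds n F) (u : ℝ × ℝ) {ζ : Z2 → ℝ} {L D : ℝ}
    (hL : ∀ y ∈ bdry (F : Set Z2), |ζ y - tilt u y| ≤ L) (hD : 0 < D) (hLD : L ≤ D)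
    (hnD : 4 * ((n ^ 2 + 1) / aV) ≤ D ^ 2) {P : Measure (↥F → ℝ)} (hP : IsGL V F ζ P)
    (x : ↥F) (q : ℕ) :
    ∫⁻ h, ENNReal.ofReal ((|h x - tilt u x| / D) ^ q) ∂P ≤
      ENNReal.ofReal (q.factorial * (4 * 4 ^ n * Real.exp 2)) := by
  have hexp : ∀ s : ℝ, |s| = 1 / D →
      ∫⁻ h, ENNReal.ofReal (Real.exp (s * (h x - tilt u x))) ∂P ≤
        ENNReal.ofReal (2 * 4 ^ n * Real.exp 2) := by
    intro s hs
    refine (lintegral_IsGL hC2.continuous hP (by fun_prop)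
      (gl_exp_moment hC2 hsym haV hlb hub hF u hL x s)).trans (ENNReal.ofReal_le_ofReal ?_)
    gcongr
    have h1 : |s| * L ≤ 1 := by
      rw [hs, one_div_mul_eq_div]
      exact (div_le_one hD).2 hLD
    have h2 : 4 * s ^ 2 * ((n ^ 2 + 1) / aV) ≤ 1 := by
      rw [← sq_abs, hs]
      calc 4 * (1 / D) ^ 2 * ((n ^ 2 + 1) / aV) = (4 * ((n ^ 2 + 1) / aV)) / D ^ 2 := by ring
        _ ≤ 1 := (div_le_one (by positivity)).2 hnD
    linarith
  have hpt : ∀ h : ↥F → ℝ, ENNReal.ofReal ((|h x - tilt u x| / D) ^ q) ≤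
      ENNReal.ofReal q.factorial * (ENNReal.ofReal (Real.exp (1 / D * (h x - tilt u x))) +
        ENNReal.ofReal (Real.exp (-(1 / D) * (h x - tilt u x)))) := by
    intro h
    rw [← ENNReal.ofReal_add (by positivity) (by positivity), ← ENNReal.ofReal_mul (by positivity)]
    apply ENNReal.ofReal_le_ofReal
    have h1 := Real.pow_div_factorial_le_exp (|h x - tilt u x| / D) (by positivity) q
    rw [div_le_iff₀ (by positivity), mul_comm] at h1
    refine h1.trans (mul_le_mul_of_nonneg_left ?_ (by positivity))
    have p1 := Real.exp_pos (1 / D * (h x - tilt u x))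
    have p2 := Real.exp_pos (-(1 / D) * (h x - tilt u x))
    rcases abs_cases (h x - tilt u x) with ⟨h2, -⟩ | ⟨h2, -⟩
    · rw [h2, show (h x - tilt u x) / D = 1 / D * (h x - tilt u x) by ring]
      linarith
    · rw [h2, show -(h x - tilt u x) / D = -(1 / D) * (h x - tilt u x) by ring]
      linarith
  calc _ ≤ _ := lintegral_mono hpt
    _ = ENNReal.ofReal q.factorial *
        (∫⁻ h, ENNReal.ofReal (Real.exp (1 / D * (h x - tilt u x))) ∂P +
          ∫⁻ h, ENNReal.ofReal (Real.exp (-(1 / D) * (h x - tilt u x))) ∂P) := by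
        rw [lintegral_const_mul' _ _ ENNReal.ofReal_ne_top, lintegral_add_left (by fun_prop)]
    _ ≤ ENNReal.ofReal q.factorial * (ENNReal.ofReal (2 * 4 ^ n * Real.exp 2) +
          ENNReal.ofReal (2 * 4 ^ n * Real.exp 2)) := by
        gcongr
        · exact hexp _ (abs_of_pos (by positivity))
        · exact hexp _ (by rw [abs_neg]; exact abs_of_pos (by positivity))
    _ = _ := by
        rw [← ENNReal.ofReal_add (by positivity) (by positivity),
          ← ENNReal.ofReal_mul (by positivity)]
        ring_nf

/-- No measurability is needed: the Bochner integral of a non-integrable function is `0 ≤ C`. -/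
theorem integral_le_of_lintegral {α : Type*} [MeasurableSpace α] {μ : Measure α} {f : α → ℝ}
    (hf : ∀ a, 0 ≤ f a) {C : ℝ} (hC : 0 ≤ C)
    (h : ∫⁻ a, ENNReal.ofReal (f a) ∂μ ≤ ENNReal.ofReal C) : ∫ a, f a ∂μ ≤ C := by
  by_cases hi : Integrable f μ
  · rw [← ofReal_integral_eq_lintegral_ofReal hi (Filter.Eventually.of_forall hf)] at h
    exact (ENNReal.ofReal_le_ofReal_iff hC).1 h
  · rw [integral_undef hi]
    exact hC

/-- A maximum of finitely many non-negative numbers is controlled by a threshold `T` and the sum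
of `q`-th powers. -/
theorem sSup_rpow_le {ι : Type*} (F : Finset ι) (hF : F.Nonempty) (f : ι → ℝ) (hf : ∀ x, 0 ≤ f x)
    {T p : ℝ} (hT : 0 < T) (hp : 0 ≤ p) {q : ℕ} (hpq : p ≤ q) :
    (sSup {m : ℝ | ∃ x ∈ F, m = f x}) ^ p ≤ T ^ p * (1 + ∑ x ∈ F, (f x / T) ^ q) := by
  have hset : {m : ℝ | ∃ x ∈ F, m = f x} = f '' F := by
    ext m
    simp [eq_comm]
  rw [hset]
  obtain ⟨x, hx, hmax⟩ := (hF.to_set.image f).csSup_mem (F.finite_toSet.image f)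
  rw [← hmax]
  have hsum : (f x / T) ^ q ≤ ∑ x ∈ F, (f x / T) ^ q :=
    Finset.single_le_sum (f := fun x => (f x / T) ^ q)
      (fun y _ => pow_nonneg (div_nonneg (hf y) hT.le) _) hx
  have h0 : 0 ≤ (f x / T) ^ q := pow_nonneg (div_nonneg (hf x) hT.le) _
  have hxT : f x ^ p = T ^ p * (f x / T) ^ p := by
    rw [← Real.mul_rpow hT.le (div_nonneg (hf x) hT.le), mul_div_cancel₀ _ hT.ne']
  rw [hxT]
  refine mul_le_mul_of_nonneg_left ?_ (by positivity)
  rcases le_total (f x / T) 1 with h | h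
  · linarith [Real.rpow_le_one (div_nonneg (hf x) hT.le) h hp]
  · have := Real.rpow_le_rpow_of_exponent_le h hpq
    rw [Real.rpow_natCast] at this
    linarith

theorem Embeds.card_le {F : Finset Z2} (hF : Embeds n F) : (F.card : ℝ) ≤ 4 ^ n := by
  have h1 : (F.image (toTor n)).card = F.card :=
    Finset.card_image_of_injOn (hF.mono Set.subset_union_left)
  have h2 := Finset.card_le_univ (F.image (toTor n))
  rw [h1, Fintype.card_prod, ZMod.card, ← mul_pow] at h2
  exact_mod_cast h2

/-- The union bound: `T` is the target scale and `16 ^ n = 4 ^ n * 4 ^ n` accounts for the number of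
sites and for the prefactor of the exponential moments. -/
theorem gl_max_moment {V : ℝ → ℝ} {aV AV : ℝ} (hC2 : ContDiff ℝ 2 V) (hsym : ∀ x, V (-x) = V x)
    (haV : 0 < aV) (hlb : ∀ x, aV ≤ deriv (deriv V) x) (hub : ∀ x, deriv (deriv V) x ≤ AV)
    {F : Finset Z2} (hne : F.Nonempty) (hF : Embeds n F) (u : ℝ × ℝ) {ζ : Z2 → ℝ} {L D : ℝ}
    (hL : ∀ y ∈ bdry (F : Set Z2), |ζ y - tilt u y| ≤ L) (hD : 0 < D) (hLD : L ≤ D)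
    (hnD : 4 * ((n ^ 2 + 1) / aV) ≤ D ^ 2) {P : Measure (↥F → ℝ)} (hP : IsGL V F ζ P)
    {T p : ℝ} (hT : 0 < T) (hp : 0 ≤ p) {q : ℕ} (hpq : p ≤ q) :
    ∫ h, (sSup {m : ℝ | ∃ x ∈ F, m = |vee F h ζ x - tilt u x|}) ^ p ∂P ≤
      T ^ p * (1 + 16 ^ n * (D / T) ^ q * (q.factorial * (4 * Real.exp 2))) := by
  have := hP.1
  refine integral_le_of_lintegral (fun h => ?_) (by positivity) ?_
  · refine Real.rpow_nonneg (Real.sSup_nonneg ?_) _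
    rintro m ⟨x, -, rfl⟩
    exact abs_nonneg _
  calc _ ≤ ∫⁻ h, ENNReal.ofReal (T ^ p) * (1 + ∑ x : ↥F, ENNReal.ofReal ((D / T) ^ q) *
          ENNReal.ofReal ((|h x - tilt u x| / D) ^ q)) ∂P := by
        refine lintegral_mono fun h => ?_
        refine (ENNReal.ofReal_le_ofReal
          (sSup_rpow_le F hne _ (fun x => abs_nonneg _) hT hp hpq)).trans (le_of_eq ?_)
        rw [ENNReal.ofReal_mul (by positivity), ENNReal.ofReal_add (by norm_num) (by positivity),
          ENNReal.ofReal_one, ← Finset.sum_coe_sort, ENNReal.ofReal_sum_of_nonneg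
            (fun _ _ => by positivity)]
        congr 3
        ext x
        rw [← ENNReal.ofReal_mul (by positivity), ← mul_pow]
        congr 2
        simp only [vee, x.2, dite_true, Subtype.coe_eta]
        field_simp
    _ = ENNReal.ofReal (T ^ p) * (1 + ∑ x : ↥F, ENNReal.ofReal ((D / T) ^ q) *
          ∫⁻ h, ENNReal.ofReal ((|h x - tilt u x| / D) ^ q) ∂P) := by
        rw [lintegral_const_mul' _ _ ENNReal.ofReal_ne_top, lintegral_add_left measurable_const,
          lintegral_finsetSum _ (fun x _ => by fun_prop)]
        simp only [lintegral_one, measure_univ, lintegral_const_mul' _ _ ENNReal.ofReal_ne_top]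
    _ ≤ ENNReal.ofReal (T ^ p) * (1 + ∑ _x : ↥F, ENNReal.ofReal ((D / T) ^ q) *
          ENNReal.ofReal (q.factorial * (4 * 4 ^ n * Real.exp 2))) := by
        gcongr with x
        exact gl_moment hC2 hsym haV hlb hub hF u hL hD hLD hnD hP x q
    _ = ENNReal.ofReal (T ^ p * (1 + F.card * ((D / T) ^ q *
          (q.factorial * (4 * 4 ^ n * Real.exp 2))))) := by
        rw [Finset.sum_const, Finset.card_univ, Fintype.card_coe, nsmul_eq_mul,
          ENNReal.ofReal_mul (p := T ^ p) (by positivity),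
          ENNReal.ofReal_add (by norm_num) (by positivity), ENNReal.ofReal_one,
          ENNReal.ofReal_mul (p := (F.card : ℝ)) (by positivity), ENNReal.ofReal_natCast,
          ENNReal.ofReal_mul (p := (D / T) ^ q) (by positivity)]
    _ ≤ _ := by
        apply ENNReal.ofReal_le_ofReal
        have e : (16 : ℝ) ^ n = 4 ^ n * 4 ^ n := by rw [← mul_pow]; norm_num
        rw [e]
        calc _ ≤ T ^ p * (1 + 4 ^ n * ((D / T) ^ q *
              (q.factorial * (4 * 4 ^ n * Real.exp 2)))) := by
              gcongr
              exact hF.card_le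
          _ = _ := by ring

end moments

/-! ### Sets of small diameter embed -/

section geometry

theorem abs_sub_le_diamZ {F : Finset Z2} {x y : Z2} (hx : x ∈ F) (hy : y ∈ F) :
    |(x.1 : ℝ) - y.1| ≤ diamZ (F : Set Z2) ∧ |(x.2 : ℝ) - y.2| ≤ diamZ (F : Set Z2) := by
  have hb : BddAbove {d : ℝ | ∃ x ∈ (F : Set Z2), ∃ y ∈ (F : Set Z2), d = edist2 x y} := by
    refine Set.Finite.bddAbove (Set.Finite.subset
      ((F ×ˢ F).finite_toSet.image fun p => edist2 p.1 p.2) ?_)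
    rintro d ⟨x, hx, y, hy, rfl⟩
    exact ⟨(x, y), by simpa using ⟨hx, hy⟩, rfl⟩
  have h : edist2 x y ≤ diamZ (F : Set Z2) := le_csSup hb ⟨x, hx, y, hy, rfl⟩
  constructor <;> refine le_trans (Real.abs_le_sqrt ?_) h
  · linarith [sq_nonneg ((x.2 : ℝ) - y.2)]
  · linarith [sq_nonneg ((x.1 : ℝ) - y.1)]

theorem near_F {F : Finset Z2} {a : Z2} (ha : a ∈ (F : Set Z2) ∪ bdry (F : Set Z2)) :
    ∃ x ∈ F, |a.1 - x.1| ≤ 1 ∧ |a.2 - x.2| ≤ 1 := by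
  rcases ha with ha | ⟨-, x, hx, hax⟩
  · exact ⟨a, ha, by simp, by simp⟩
  · unfold adjZ at hax
    refine ⟨x, hx, ?_, ?_⟩ <;> rw [← sq_le_one_iff_abs_le_one] <;>
      linarith [sq_nonneg (a.1 - x.1), sq_nonneg (a.2 - x.2)]

theorem eq_of_cast_eq {n : ℕ} {R : ℝ} (hR : R + 2 < 2 ^ n) {a b x y : ℤ} (hax : |a - x| ≤ 1)
    (hby : |b - y| ≤ 1) (hxy : |(x : ℝ) - y| ≤ R)
    (h : (a : ZMod (2 ^ n)) = (b : ZMod (2 ^ n))) : a = b := by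
  rw [ZMod.intCast_eq_intCast_iff_dvd_sub] at h
  have hlt : |b - a| < ((2 ^ n : ℕ) : ℤ) := by
    have hax' : |(a : ℝ) - x| ≤ 1 := by exact_mod_cast hax
    have hby' : |(b : ℝ) - y| ≤ 1 := by exact_mod_cast hby
    have : |(b : ℝ) - a| < 2 ^ n := by
      rw [abs_le] at hax' hby' hxy
      rw [abs_lt]
      constructor <;> linarith [hax'.1, hax'.2, hby'.1, hby'.2, hxy.1, hxy.2]
    exact_mod_cast this
  linarith [Int.eq_zero_of_abs_lt_dvd h hlt]

theorem embeds_of_diam {n : ℕ} {F : Finset Z2} (hR : diamZ (F : Set Z2) + 2 < 2 ^ n) :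
    Embeds n F := by
  intro a ha b hb hab
  obtain ⟨x, hx, hax1, hax2⟩ := near_F ha
  obtain ⟨y, hy, hby1, hby2⟩ := near_F hb
  obtain ⟨h1, h2⟩ := abs_sub_le_diamZ hx hy
  simp only [toTor, Prod.mk.injEq] at hab
  exact Prod.ext (eq_of_cast_eq hR hax1 hby1 h1 hab.1) (eq_of_cast_eq hR hax2 hby2 h2 hab.2)

end geometry

/-! ### Choice of the torus side and growth of logarithms -/

section scales

/-- The torus side is comparable to the diameter. -/
theorem exists_side {R : ℝ} (hR : 2 ≤ R) : ∃ n : ℕ, R + 2 < 2 ^ n ∧ (2 : ℝ) ^ n ≤ 4 * R := by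
  obtain ⟨m, hm, hm'⟩ := exists_nat_pow_near (x := R + 2) (y := 2) (by linarith) (by norm_num)
  refine ⟨m + 1, hm', ?_⟩
  rw [pow_succ]
  linarith

theorem side_le {R ε : ℝ} (hR : 2 ≤ R) (hε : 0 < ε) {n : ℕ} (hn : (2 : ℝ) ^ n ≤ 4 * R) :
    (n : ℝ) ≤ 2 * (4 ^ ε / ε) * R ^ ε := by
  have h1 : n * Real.log 2 ≤ Real.log (4 * R) := by
    rw [← Real.log_pow]
    exact Real.log_le_log (by positivity) hn
  have h2 : Real.log (4 * R) ≤ (4 * R) ^ ε / ε := Real.log_le_rpow_div (by linarith) hε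
  rw [Real.mul_rpow (by norm_num) (by linarith)] at h2
  have h3 : (1 / 2 : ℝ) ≤ Real.log 2 := by linarith [Real.log_two_gt_d9]
  have h4 : (n : ℝ) * (1 / 2) ≤ n * Real.log 2 := by gcongr
  calc (n : ℝ) = 2 * (n * (1 / 2)) := by ring
    _ ≤ 2 * (4 ^ ε * R ^ ε / ε) := by linarith
    _ = _ := by ring

theorem log_rpow_le {R Λ δ : ℝ} (hR : 2 ≤ R) (hΛ : 0 < Λ) (hδ : 0 < δ) :
    Real.log R ^ Λ ≤ (Λ / δ) ^ Λ * R ^ δ := by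
  have hd : 0 < δ / Λ := by positivity
  have hR0 : 0 ≤ R := by linarith
  calc Real.log R ^ Λ ≤ (R ^ (δ / Λ) / (δ / Λ)) ^ Λ :=
        Real.rpow_le_rpow (Real.log_nonneg (by linarith)) (Real.log_le_rpow_div hR0 hd) hΛ.le
    _ = (Λ / δ * R ^ (δ / Λ)) ^ Λ := by
        congr 1
        field_simp
    _ = _ := by
        rw [Real.mul_rpow (by positivity) (by positivity), ← Real.rpow_mul hR0,
          div_mul_cancel₀ _ hΛ.ne']

end scales

/-! ### The moment bound -/

/-- Moments of the maximum.
For every `Λ̄, ε > 0` and `p ≥ 1` there is `c = c(Λ̄, ε, p, V) > 0` such that for every finite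
connected `F ⊆ ℤ²` of diameter `R ≥ 2`, every `u ∈ ℝ²` and every boundary condition `ζ` with
`max_{x ∈ ∂F} |ζ(x) − u·x| ≤ Λ̄ (log R)^Λ̄`: if `h ∼ P_F^ζ` and
`M = max_{x ∈ F} |h(x) − u·x|`, then `(E[M^p])^{1/p} ≤ c R^ε`. -/
theorem moments_of_the_maximum
    (V : ℝ → ℝ) (aV AV : ℝ)
    (hC2 : ContDiff ℝ 2 V) (hsym : ∀ x, V (-x) = V x)
    (haV : 0 < aV) (hlb : ∀ x, aV ≤ deriv (deriv V) x)
    (hub : ∀ x, deriv (deriv V) x ≤ AV) :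
    ∀ Λ ε p : ℝ, 0 < Λ → 0 < ε → 1 ≤ p →
    ∃ c : ℝ, 0 < c ∧
      ∀ (F : Finset Z2) (u : ℝ × ℝ) (ζ : Z2 → ℝ),
        DiscConnected (F : Set Z2) →
        2 ≤ diamZ (F : Set Z2) →
        (∀ x ∈ bdry (F : Set Z2),
          |ζ x - (u.1 * (x.1 : ℝ) + u.2 * (x.2 : ℝ))|
            ≤ Λ * Real.log (diamZ (F : Set Z2)) ^ Λ) →
        ∀ P : Measure (↥F → ℝ), IsGL V F ζ P →
          (∫ h, (sSup {m : ℝ | ∃ x ∈ F,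
              m = |vee F h ζ x - (u.1 * (x.1 : ℝ) + u.2 * (x.2 : ℝ))|}) ^ p ∂P) ^ (1 / p)
            ≤ c * diamZ (F : Set Z2) ^ ε := by
  intro Λ ε p hΛ hε hp
  have hδ : 0 < ε / 2 := by positivity
  -- `q ≥ p` makes `M ^ p` controllable by `q`-th moments, and `q ε / 2 ≥ 4` lets the gain
  -- `R ^ (- q ε / 2)` absorb the factor `16 ^ n ≤ 256 R ^ 4`.
  obtain ⟨q, hq⟩ := exists_nat_ge (max p (8 / ε))
  have hpq : p ≤ q := (le_max_left _ _).trans hq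
  have hqε : 4 ≤ ε / 2 * q := by
    have h := (le_max_right _ _).trans hq
    rw [div_le_iff₀ hε] at h
    linarith
  set κ : ℝ := 2 / Real.sqrt aV with hκ
  have hκ0 : 0 < κ := by positivity
  have hκ2 : κ ^ 2 = 4 / aV := by rw [hκ, div_pow, Real.sq_sqrt haV.le]; norm_num
  set C₁ : ℝ := Λ * (Λ / (ε / 2)) ^ Λ + κ * (2 * (4 ^ (ε / 2) / (ε / 2)) + 1) with hC₁
  have hC₁0 : 0 < C₁ := by positivity
  set C₂ : ℝ := 256 * C₁ ^ q * (q.factorial * (4 * Real.exp 2)) with hC₂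
  have hC₂0 : 0 < C₂ := by positivity
  refine ⟨(1 + C₂) ^ (1 / p), by positivity, ?_⟩
  intro F u ζ hconn hdiam hζ P hP
  set R := diamZ (F : Set Z2) with hR
  have hR0 : 0 < R := by linarith
  have hR1 : 1 ≤ R := by linarith
  obtain ⟨n, hn1, hn2⟩ := exists_side hdiam
  have hF : Embeds n F := embeds_of_diam hn1
  have hlog : 0 ≤ Real.log R := Real.log_nonneg hR1
  have hpow1 : 1 ≤ R ^ (ε / 2) := Real.one_le_rpow hR1 hδ.le
  set D : ℝ := Λ * Real.log R ^ Λ + κ * (n + 1) with hD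
  have hL0 : 0 ≤ Λ * Real.log R ^ Λ := by positivity
  have hD0 : 0 < D := by positivity
  have hLD : Λ * Real.log R ^ Λ ≤ D := by
    rw [hD]
    have : 0 ≤ κ * (n + 1) := by positivity
    linarith
  have hnD : 4 * ((n ^ 2 + 1) / aV) ≤ D ^ 2 := by
    calc 4 * ((n ^ 2 + 1) / aV) = κ ^ 2 * (n ^ 2 + 1) := by rw [hκ2]; ring
      _ ≤ κ ^ 2 * (n + 1) ^ 2 := by
          have : (0 : ℝ) ≤ n := n.cast_nonneg
          gcongr
          nlinarith
      _ = (κ * (n + 1)) ^ 2 := by ring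
      _ ≤ D ^ 2 := by
          gcongr
          rw [hD]
          linarith
  have hDR : D ≤ C₁ * R ^ (ε / 2) := by
    have h1 := log_rpow_le hdiam hΛ hδ
    have h2 := side_le hdiam hδ hn2
    calc D ≤ Λ * ((Λ / (ε / 2)) ^ Λ * R ^ (ε / 2)) +
          κ * (2 * (4 ^ (ε / 2) / (ε / 2)) * R ^ (ε / 2) + R ^ (ε / 2)) := by
          rw [hD]
          gcongr
      _ = _ := by rw [hC₁]; ring
  have key := gl_max_moment hC2 hsym haV hlb hub (Finset.coe_nonempty.1 hconn.1) hF u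
    (L := Λ * Real.log R ^ Λ) (D := D) (fun y hy => hζ y hy) hD0 hLD hnD hP (T := R ^ ε)
    (p := p) (by positivity) (by linarith) hpq
  have hRq : (D / R ^ ε) ^ q ≤ C₁ ^ q * (R ^ 4)⁻¹ := by
    have e1 : R ^ ε = R ^ (ε / 2) * R ^ (ε / 2) := by
      rw [← Real.rpow_add hR0]
      ring_nf
    have h1 : D / R ^ ε ≤ C₁ * (R ^ (ε / 2))⁻¹ := by
      rw [div_le_iff₀ (by positivity), e1]
      refine hDR.trans (le_of_eq ?_)
      field_simp
    have h2 : R ^ 4 ≤ (R ^ (ε / 2)) ^ q := by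
      rw [← Real.rpow_natCast (R ^ (ε / 2)), ← Real.rpow_mul hR0.le, ← Real.rpow_natCast]
      exact Real.rpow_le_rpow_of_exponent_le hR1 (by exact_mod_cast hqε)
    calc (D / R ^ ε) ^ q ≤ (C₁ * (R ^ (ε / 2))⁻¹) ^ q := by gcongr
      _ = C₁ ^ q * ((R ^ (ε / 2)) ^ q)⁻¹ := by rw [mul_pow, inv_pow]
      _ ≤ _ := by gcongr
  have h16 : (16 : ℝ) ^ n ≤ 256 * R ^ 4 := by
    calc (16 : ℝ) ^ n = (2 ^ n) ^ 4 := by rw [← pow_mul, mul_comm, pow_mul]; norm_num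
      _ ≤ (4 * R) ^ 4 := by gcongr
      _ = _ := by ring
  have hfin : ∫ h, (sSup {m : ℝ | ∃ x ∈ F, m = |vee F h ζ x - tilt u x|}) ^ p ∂P ≤
      (R ^ ε) ^ p * (1 + C₂) := by
    refine key.trans ?_
    gcongr
    calc 16 ^ n * (D / R ^ ε) ^ q * (q.factorial * (4 * Real.exp 2))
        ≤ (256 * R ^ 4) * (C₁ ^ q * (R ^ 4)⁻¹) * (q.factorial * (4 * Real.exp 2)) := by gcongr
      _ = C₂ := by rw [hC₂]; field_simp
  have hnn : 0 ≤ ∫ h, (sSup {m : ℝ | ∃ x ∈ F, m = |vee F h ζ x - tilt u x|}) ^ p ∂P := by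
    refine integral_nonneg fun h => Real.rpow_nonneg (Real.sSup_nonneg ?_) _
    rintro m ⟨x, -, rfl⟩
    exact abs_nonneg _
  have hp0 : p ≠ 0 := by linarith
  calc _ ≤ ((R ^ ε) ^ p * (1 + C₂)) ^ (1 / p) :=
        Real.rpow_le_rpow hnn hfin (by positivity)
    _ = (1 + C₂) ^ (1 / p) * R ^ ε := by
        rw [Real.mul_rpow (by positivity) (by positivity), ← Real.rpow_mul (by positivity),
          mul_one_div_cancel hp0, Real.rpow_one, mul_comm]

end
end

section
/- Energy inequality for the discrete parabolic equation with static boundary data: There exists a constant C > 0 depending only on constants 0 < a ≤ A < ∞ such that the following holds. Let D ⊆ ℤ² be finite, T > 0, and for each nearest-neighbor edge b with at least one endpoint in D let c_t(b) ∈ [a, A] be measurable in t ∈ [0, T]. Suppose f : [0, T] × (D ∪ ∂D) → ℝ satisfies: for each x ∈ D the map t ↦ f_t(x) is differentiable with ∂_t f_t(x) = Σ_{y ∼ x, y ∈ D∪∂D} c_t((x, y)) (f_t(y) − f_t(x)), and f_t(x) = f_0(x) for all t ∈ [0, T] and x ∈ ∂D. Then Σ_{x∈D} f_T(x)² + ∫_0^T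 Σ_{b∈D*°} |∇f_t(b)|² dt ≤ C ( Σ_{x∈D} f_0(x)² + ∫_0^T Σ_{b∈∂D*} |f_0(x_b)| |∇f_t(b)| dt ), where D*° is the set of edges with both endpoints in D, ∂D* the set of edges with one endpoint in D and one in ∂D, and for b ∈ ∂D*, x_b denotes the endpoint of b lying in ∂D. -/
/-!
Differentiate `G t = ∑_{x ∈ D} f_t(x)²` and sum by parts (`sum_mul_generator`). An interior edge
contributes `-2 c (∇f)²`. A boundary edge with interior endpoint `y` and exterior endpoint `z`
contributes `2 c f(y) (f(z) - f(y)) = 2 c f(z) (f(z) - f(y)) - 2 c (∇f)²`. The rate bounds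
therefore give `G' ≤ 2 A ∑_{∂D*} |f_0(x_b)| |∇f| - 2 a ∑_{D*°} |∇f|²` (`sum_mul_generator_le`).

The right side is continuous in `t`, so the one-sided fundamental theorem of calculus, for a
differentiable function whose derivative is dominated by an integrable one, yields
`G T + 2 a ∫ ∑_{D*°} |∇f|² ≤ G 0 + 2 A ∫ ∑_{∂D*} |f_0(x_b)| |∇f|`.
The constant is `C = max 1 (2 A) / min 1 (2 a)`.
-/

open MeasureTheory ProbabilityTheory Real
open scoped ENNReal NNReal Classical

noncomputable section

/-- The four lattice directions. -/
def nbrs : Finset Z2 := {((1, 0) : Z2), ((-1, 0) : Z2), ((0, 1) : Z2), ((0, -1) : Z2)}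

/-! ### Edges of `D` as a finite set -/

/-- The two positive lattice directions. -/
def posDirs : Finset Z2 := {((1, 0) : Z2), ((0, 1) : Z2)}

/-- Positively oriented edges whose initial point lies in `D`. -/
def outEdges (D : Finset Z2) : Finset (Z2 × Z2) :=
  (D ×ˢ posDirs).image fun p => (p.1, p.1 + p.2)

/-- Positively oriented edges whose terminal point lies in `D`. -/
def inEdges (D : Finset Z2) : Finset (Z2 × Z2) :=
  (D ×ˢ posDirs).image fun p => (p.1 - p.2, p.1)

/-- The finite set of positively oriented edges touching `D`; a finset version of `edgesOf D`. -/
def touchEdges (D : Finset Z2) : Finset (Z2 × Z2) := outEdges D ∪ inEdges D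

lemma mem_outEdges (D : Finset Z2) (b : Z2 × Z2) :
    b ∈ outEdges D ↔ b.1 ∈ D ∧ (b.2 = b.1 + ((1, 0) : Z2) ∨ b.2 = b.1 + ((0, 1) : Z2)) := by
  obtain ⟨x, y⟩ := b
  simp only [outEdges, posDirs, Finset.mem_image, Finset.mem_product, Finset.mem_insert,
    Finset.mem_singleton, Prod.exists, Prod.mk.injEq]
  constructor
  · rintro ⟨p, q, r, s, ⟨hp, hq⟩, rfl, rfl⟩
    refine ⟨hp, ?_⟩
    rcases hq with ⟨rfl, rfl⟩ | ⟨rfl, rfl⟩ <;> simp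
  · rintro ⟨hx, h | h⟩
    · exact ⟨x.1, x.2, 1, 0, ⟨hx, by simp⟩, rfl, h.symm⟩
    · exact ⟨x.1, x.2, 0, 1, ⟨hx, by simp⟩, rfl, h.symm⟩

lemma mem_inEdges (D : Finset Z2) (b : Z2 × Z2) :
    b ∈ inEdges D ↔ b.2 ∈ D ∧ (b.2 = b.1 + ((1, 0) : Z2) ∨ b.2 = b.1 + ((0, 1) : Z2)) := by
  obtain ⟨x, y⟩ := b
  simp only [inEdges, posDirs, Finset.mem_image, Finset.mem_product, Finset.mem_insert,
    Finset.mem_singleton, Prod.exists, Prod.mk.injEq]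
  constructor
  · rintro ⟨p, q, r, s, ⟨hp, hq⟩, rfl, rfl⟩
    refine ⟨hp, ?_⟩
    rcases hq with ⟨rfl, rfl⟩ | ⟨rfl, rfl⟩ <;> simp
  · rintro ⟨hy, h | h⟩
    · exact ⟨y.1, y.2, 1, 0, ⟨hy, by simp⟩, by rw [h]; simp, rfl⟩
    · exact ⟨y.1, y.2, 0, 1, ⟨hy, by simp⟩, by rw [h]; simp, rfl⟩

lemma mem_touchEdges (D : Finset Z2) (b : Z2 × Z2) :
    b ∈ touchEdges D ↔ b ∈ edgesOf (D : Set Z2) := by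
  simp only [touchEdges, Finset.mem_union, mem_outEdges, mem_inEdges, edgesOf, Set.mem_ofPred_eq,
    Finset.mem_coe]
  tauto

lemma adjZ_of_edge {b : Z2 × Z2}
    (h : b.2 = b.1 + ((1, 0) : Z2) ∨ b.2 = b.1 + ((0, 1) : Z2)) :
    adjZ b.1 b.2 ∧ adjZ b.2 b.1 := by
  unfold adjZ
  rcases h with h | h <;> simp [h]

lemma intEdges_eq (D : Finset Z2) :
    intEdges (D : Set Z2) = ((touchEdges D).filter fun b => b.1 ∈ D ∧ b.2 ∈ D : Finset _) := by
  ext b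
  simp only [Finset.coe_filter, Set.mem_ofPred_eq, mem_touchEdges, intEdges, edgesOf,
    Finset.mem_coe]
  tauto

lemma bdEdges_eq (D : Finset Z2) :
    bdEdges (D : Set Z2) =
      ((touchEdges D).filter fun b => ¬ (b.1 ∈ D ∧ b.2 ∈ D) : Finset _) := by
  ext b
  simp only [Finset.coe_filter, Set.mem_ofPred_eq, mem_touchEdges, bdEdges, edgesOf,
    Finset.mem_coe, bdry]
  constructor
  · tauto
  · rintro ⟨⟨he, hD⟩, hn⟩
    obtain ⟨h1, h2⟩ := adjZ_of_edge he
    refine ⟨he, ?_⟩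
    by_cases hb : b.1 ∈ D
    · exact Or.inl ⟨hb, fun h => hn ⟨hb, h⟩, b.1, hb, h2⟩
    · have hb2 := hD.resolve_left hb
      exact Or.inr ⟨⟨hb, b.2, hb2, h1⟩, hb2⟩

lemma mem_bdry_of_edge_fst {D : Finset Z2} {b : Z2 × Z2} (hb : b ∈ touchEdges D)
    (h : b.1 ∉ D) : b.1 ∈ bdry (D : Set Z2) := by
  rw [mem_touchEdges] at hb
  exact ⟨by simpa using h, b.2, hb.2.resolve_left (by simpa using h), (adjZ_of_edge hb.1).1⟩

lemma mem_bdry_of_edge_snd {D : Finset Z2} {b : Z2 × Z2} (hb : b ∈ touchEdges D)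
    (h : b.2 ∉ D) : b.2 ∈ bdry (D : Set Z2) := by
  rw [mem_touchEdges] at hb
  exact ⟨by simpa using h, b.1, hb.2.resolve_right (by simpa using h), (adjZ_of_edge hb.1).2⟩

/-! ### Summation by parts -/

lemma sum_touchEdges_fst (D : Finset Z2) (g : Z2 × Z2 → ℝ) :
    ∑ b ∈ touchEdges D, (if b.1 ∈ D then g b else 0) =
      ∑ x ∈ D, ∑ e ∈ posDirs, g (x, x + e) := by
  have hf : (touchEdges D).filter (fun b => b.1 ∈ D) = outEdges D := by
    ext b
    simp only [touchEdges, Finset.mem_filter, Finset.mem_union, mem_outEdges, mem_inEdges]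
    tauto
  rw [← Finset.sum_filter, hf, outEdges, Finset.sum_image, Finset.sum_product]
  rintro ⟨x, e⟩ - ⟨x', e'⟩ - h
  simp only [Prod.mk.injEq] at h
  obtain ⟨rfl, h⟩ := h
  simpa using h

lemma sum_touchEdges_snd (D : Finset Z2) (g : Z2 × Z2 → ℝ) :
    ∑ b ∈ touchEdges D, (if b.2 ∈ D then g b else 0) =
      ∑ x ∈ D, ∑ e ∈ posDirs, g (x - e, x) := by
  have hf : (touchEdges D).filter (fun b => b.2 ∈ D) = inEdges D := by
    ext b
    simp only [touchEdges, Finset.mem_filter, Finset.mem_union, mem_outEdges, mem_inEdges]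
    tauto
  rw [← Finset.sum_filter, hf, inEdges, Finset.sum_image, Finset.sum_product]
  rintro ⟨x, e⟩ - ⟨x', e'⟩ - h
  simp only [Prod.mk.injEq] at h
  obtain ⟨h, rfl⟩ := h
  simpa using h

lemma add_mem_union_bdry {D : Finset Z2} {x e : Z2} (hx : x ∈ D) (he : e ∈ nbrs) :
    x + e ∈ (D : Set Z2) ∪ bdry (D : Set Z2) := by
  by_cases h : x + e ∈ D
  · exact Or.inl h
  · refine Or.inr ⟨by simpa using h, x, hx, ?_⟩
    simp only [nbrs, Finset.mem_insert, Finset.mem_singleton] at he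
    rcases he with rfl | rfl | rfl | rfl <;> simp [adjZ]

lemma sum_nbrs (F : Z2 → ℝ) : ∑ e ∈ nbrs, F e = ∑ e ∈ posDirs, (F e + F (-e)) := by
  simp [nbrs, posDirs]
  ring

/-- Discrete Green formula: the sum over `D` of `u` times the divergence-form operator applied
to `u` becomes a sum over edges, where only the endpoints lying in `D` carry a weight. -/
lemma sum_mul_generator (D : Finset Z2) (k : Z2 → Z2 → ℝ) (hk : ∀ x y, k x y = k y x)
    (u : Z2 → ℝ) :
    ∑ x ∈ D, u x * (∑ e ∈ nbrs, if (x + e) ∈ (D : Set Z2) ∪ bdry (D : Set Z2)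
        then k x (x + e) * (u (x + e) - u x) else 0) =
      ∑ b ∈ touchEdges D, ((if b.1 ∈ D then u b.1 else 0) - (if b.2 ∈ D then u b.2 else 0)) *
        (k b.1 b.2 * grad u b) := by
  have h1 := sum_touchEdges_fst D fun b => u b.1 * (k b.1 b.2 * grad u b)
  have h2 := sum_touchEdges_snd D fun b => u b.2 * (k b.1 b.2 * grad u b)
  have h3 : ∑ b ∈ touchEdges D,
      ((if b.1 ∈ D then u b.1 else 0) - (if b.2 ∈ D then u b.2 else 0)) *
        (k b.1 b.2 * grad u b) =
      ∑ b ∈ touchEdges D, (if b.1 ∈ D then u b.1 * (k b.1 b.2 * grad u b) else 0) -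
      ∑ b ∈ touchEdges D, (if b.2 ∈ D then u b.2 * (k b.1 b.2 * grad u b) else 0) := by
    rw [← Finset.sum_sub_distrib]
    refine Finset.sum_congr rfl fun b _ => ?_
    simp only [sub_mul, ite_mul, zero_mul]
  rw [h3, h1, h2, ← Finset.sum_sub_distrib]
  refine Finset.sum_congr rfl fun x hx => ?_
  rw [Finset.sum_congr rfl fun e he => if_pos (add_mem_union_bdry hx he), sum_nbrs,
    Finset.mul_sum, ← Finset.sum_sub_distrib]
  refine Finset.sum_congr rfl fun e _ => ?_
  simp only [grad, ← sub_eq_add_neg]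
  rw [hk (x - e) x]
  ring

/-- Pointwise-in-time energy dissipation. On a boundary edge with interior endpoint `y` and
exterior endpoint `z`, the term `u y * (u z - u y)` equals `u z * (u z - u y) - (u z - u y) ^ 2`,
and the negative square is discarded. -/
lemma sum_mul_generator_le (a A : ℝ) (ha : 0 < a) (D : Finset Z2) (k : Z2 → Z2 → ℝ)
    (hk : ∀ x y, k x y = k y x)
    (hkA : ∀ b ∈ edgesOf (D : Set Z2), a ≤ k b.1 b.2 ∧ k b.1 b.2 ≤ A) (u : Z2 → ℝ) :
    ∑ x ∈ D, u x * (∑ e ∈ nbrs, if (x + e) ∈ (D : Set Z2) ∪ bdry (D : Set Z2)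
        then k x (x + e) * (u (x + e) - u x) else 0) ≤
      A * (∑ᶠ b ∈ bdEdges (D : Set Z2), |u (bEnd (D : Set Z2) b)| * |grad u b|) -
        a * ∑ᶠ b ∈ intEdges (D : Set Z2), |grad u b| ^ 2 := by
  rw [sum_mul_generator D k hk, bdEdges_eq, intEdges_eq, finsum_mem_coe_finset,
    finsum_mem_coe_finset, Finset.sum_filter, Finset.sum_filter, Finset.mul_sum, Finset.mul_sum,
    ← Finset.sum_sub_distrib]
  refine Finset.sum_le_sum fun b hb => ?_
  rw [mem_touchEdges] at hb
  obtain ⟨hka, hkA⟩ := hkA b hb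
  have hk0 : 0 ≤ k b.1 b.2 := ha.le.trans hka
  have key : ∀ z w g : ℝ, w * g = z * g - g ^ 2 → w * (k b.1 b.2 * g) ≤ A * (|z| * |g|) := by
    intro z w g h
    calc w * (k b.1 b.2 * g) = k b.1 b.2 * (z * g - g ^ 2) := by rw [← h]; ring
      _ ≤ k b.1 b.2 * (|z| * |g|) := by
          refine mul_le_mul_of_nonneg_left ?_ hk0
          rw [← abs_mul]
          linarith [le_abs_self (z * g), sq_nonneg g]
      _ ≤ A * (|z| * |g|) := mul_le_mul_of_nonneg_right hkA (by positivity)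
  have hD : b.1 ∈ D ∨ b.2 ∈ D := hb.2
  by_cases h1 : b.1 ∈ D
  · by_cases h2 : b.2 ∈ D
    · simp only [h1, h2, if_true, and_self, not_true, if_false, mul_zero, zero_sub, sq_abs]
      have : a * grad u b ^ 2 ≤ k b.1 b.2 * grad u b ^ 2 :=
        mul_le_mul_of_nonneg_right hka (sq_nonneg _)
      calc _ = -(k b.1 b.2 * grad u b ^ 2) := by unfold grad; ring
        _ ≤ _ := by linarith
    · simp only [h1, h2, if_true, and_false, not_false_iff, if_false, mul_zero, sub_zero, bEnd,
        Finset.mem_coe]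
      exact key _ _ _ (by unfold grad; ring)
  · have h2 : b.2 ∈ D := hD.resolve_left h1
    simp only [h1, h2, if_true, false_and, not_false_iff, if_false, mul_zero, sub_zero, bEnd,
      Finset.mem_coe, zero_sub]
    -- here `b` points from the exterior to the interior endpoint, so the signs are reversed
    rw [← abs_neg (u b.1)]
    exact key _ _ _ (by unfold grad; ring)

/-- Energy inequality.
There is `C > 0` depending only on `0 < a ≤ A < ∞` such that: if `f` solves the discrete
parabolic equation `∂_t f_t(x) = Σ_{y∼x, y ∈ D∪∂D} c_t((x,y))(f_t(y) − f_t(x))` on `D` for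
`t ∈ [0,T]` with rates `c_t(b) ∈ [a,A]` measurable in `t`, and `f` is static on `∂D`, then
`Σ_D f_T² + ∫_0^T Σ_{D*°} |∇f_t|² ≤ C (Σ_D f_0² + ∫_0^T Σ_{∂D*} |f_0(x_b)||∇f_t(b)|)`. -/
theorem energy_inequality (a A : ℝ) (ha : 0 < a) (haA : a ≤ A) :
    ∃ C : ℝ, 0 < C ∧
      ∀ (D : Finset Z2) (T : ℝ), 0 < T →
      ∀ c : ℝ → Z2 → Z2 → ℝ,
        (∀ t x y, c t x y = c t y x) →
        (∀ t ∈ Set.Icc (0 : ℝ) T, ∀ b ∈ edgesOf (D : Set Z2),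
          a ≤ c t b.1 b.2 ∧ c t b.1 b.2 ≤ A) →
        (∀ x y : Z2, Measurable fun t : Set.Icc (0 : ℝ) T => c (t : ℝ) x y) →
      ∀ f : ℝ → Z2 → ℝ,
        (∀ x ∈ D, ∀ t ∈ Set.Icc (0 : ℝ) T,
          HasDerivAt (fun s => f s x)
            (∑ e ∈ nbrs, if (x + e) ∈ (D : Set Z2) ∪ bdry (D : Set Z2)
              then c t x (x + e) * (f t (x + e) - f t x) else 0) t) →
        (∀ x ∈ bdry (D : Set Z2), ∀ t ∈ Set.Icc (0 : ℝ) T, f t x = f 0 x) →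
        (∑ x ∈ D, (f T x) ^ 2)
            + (∫ t in (0 : ℝ)..T, ∑ᶠ b ∈ intEdges (D : Set Z2), |grad (f t) b| ^ 2)
          ≤ C * ((∑ x ∈ D, (f 0 x) ^ 2)
            + ∫ t in (0 : ℝ)..T, ∑ᶠ b ∈ bdEdges (D : Set Z2),
                |f 0 (bEnd (D : Set Z2) b)| * |grad (f t) b|) := by
  have hm : 0 < min 1 (2 * a) := lt_min one_pos (by linarith)
  have hM : 0 < max 1 (2 * A) := lt_max_of_lt_left one_pos
  refine ⟨max 1 (2 * A) / min 1 (2 * a), div_pos hM hm, ?_⟩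
  intro D T hT c hc hcA _ f hf hbd
  set I : ℝ → ℝ := fun t => ∑ᶠ b ∈ intEdges (D : Set Z2), |grad (f t) b| ^ 2 with hI
  set B : ℝ → ℝ := fun t => ∑ᶠ b ∈ bdEdges (D : Set Z2),
    |f 0 (bEnd (D : Set Z2) b)| * |grad (f t) b| with hB
  have hcontD : ∀ x ∈ D, ContinuousOn (fun t => f t x) (Set.Icc 0 T) := fun x hx t ht =>
    (hf x hx t ht).continuousAt.continuousWithinAt
  have hcontB : ∀ x ∈ bdry (D : Set Z2), ContinuousOn (fun t => f t x) (Set.Icc 0 T) :=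
    fun x hx => continuousOn_const.congr fun t ht => hbd x hx t ht
  have hgrad : ∀ b ∈ touchEdges D, ContinuousOn (fun t => grad (f t) b) (Set.Icc 0 T) := by
    intro b hb
    refine ContinuousOn.sub ?_ ?_
    · by_cases h : b.2 ∈ D
      · exact hcontD _ h
      · exact hcontB _ (mem_bdry_of_edge_snd hb h)
    · by_cases h : b.1 ∈ D
      · exact hcontD _ h
      · exact hcontB _ (mem_bdry_of_edge_fst hb h)
  have hIc : ContinuousOn I (Set.Icc 0 T) := by
    simp only [hI, intEdges_eq, finsum_mem_coe_finset]
    exact continuousOn_finsetSum _ fun b hb => ((hgrad b (Finset.mem_filter.1 hb).1).abs).pow 2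
  have hBc : ContinuousOn B (Set.Icc 0 T) := by
    simp only [hB, bdEdges_eq, finsum_mem_coe_finset]
    exact continuousOn_finsetSum _ fun b hb =>
      continuousOn_const.mul (hgrad b (Finset.mem_filter.1 hb).1).abs
  have hII : IntervalIntegrable I volume 0 T := hIc.intervalIntegrable_of_Icc hT.le
  have hBI : IntervalIntegrable B volume 0 T := hBc.intervalIntegrable_of_Icc hT.le
  have hderiv : ∀ t ∈ Set.Icc (0 : ℝ) T, HasDerivAt (fun s => ∑ x ∈ D, f s x ^ 2)
      (∑ x ∈ D, 2 * (f t x * ∑ e ∈ nbrs, if (x + e) ∈ (D : Set Z2) ∪ bdry (D : Set Z2)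
              then c t x (x + e) * (f t (x + e) - f t x) else 0)) t := by
    intro t ht
    refine HasDerivAt.fun_sum fun x hx => ?_
    refine ((hf x hx t ht).fun_pow 2).congr_deriv ?_
    simp only [Nat.cast_ofNat, Nat.add_one_sub_one, pow_one]
    ring
  have hle : ∀ t ∈ Set.Icc (0 : ℝ) T,
      (∑ x ∈ D, 2 * (f t x * ∑ e ∈ nbrs, if (x + e) ∈ (D : Set Z2) ∪ bdry (D : Set Z2)
              then c t x (x + e) * (f t (x + e) - f t x) else 0)) ≤
        2 * A * B t - 2 * a * I t := by
    intro t ht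
    have h := sum_mul_generator_le a A ha D (c t) (hc t) (hcA t ht) (f t)
    -- on a boundary edge the exterior endpoint is static, so `f t` there is `f 0`
    have hBt : (∑ᶠ b ∈ bdEdges (D : Set Z2), |f t (bEnd (D : Set Z2) b)| * |grad (f t) b|) =
        B t := by
      refine finsum_mem_congr rfl fun b hb => ?_
      have hz : bEnd (D : Set Z2) b ∈ bdry (D : Set Z2) := by
        unfold bEnd
        rcases hb.2 with ⟨h1, h2⟩ | ⟨h1, h2⟩
        · rwa [if_pos h1]
        · rwa [if_neg h1.1]
      rw [hbd _ hz t ht]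
    rw [hBt] at h
    rw [← Finset.mul_sum]
    change _ ≤ A * B t - a * I t at h
    linarith
  have hmain := intervalIntegral.sub_le_integral_of_hasDeriv_right_of_le
    (φ := fun t => 2 * A * B t - 2 * a * I t) hT.le
    (fun t ht => (hderiv t ht).continuousAt.continuousWithinAt)
    (fun t ht => (hderiv t (Set.Ioo_subset_Icc_self ht)).hasDerivWithinAt)
    (((continuousOn_const.mul hBc).sub (continuousOn_const.mul hIc)).integrableOn_Icc)
    (fun t ht => hle t (Set.Ioo_subset_Icc_self ht))
  rw [intervalIntegral.integral_sub (hBI.const_mul _) (hII.const_mul _),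
    intervalIntegral.integral_const_mul, intervalIntegral.integral_const_mul] at hmain
  have hI0 : 0 ≤ ∫ t in (0 : ℝ)..T, I t :=
    intervalIntegral.integral_nonneg hT.le fun t _ =>
      finsum_nonneg fun b => finsum_nonneg fun _ => by positivity
  have hB0 : 0 ≤ ∫ t in (0 : ℝ)..T, B t :=
    intervalIntegral.integral_nonneg hT.le fun t _ =>
      finsum_nonneg fun b => finsum_nonneg fun _ => by positivity
  have hG0 : 0 ≤ ∑ x ∈ D, f 0 x ^ 2 := Finset.sum_nonneg fun x _ => sq_nonneg _
  have hGT : 0 ≤ ∑ x ∈ D, f T x ^ 2 := Finset.sum_nonneg fun x _ => sq_nonneg _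
  rw [div_mul_eq_mul_div, le_div_iff₀ hm]
  have e1 := mul_le_mul_of_nonneg_right (min_le_left 1 (2 * a)) hGT
  have e2 := mul_le_mul_of_nonneg_right (min_le_right 1 (2 * a)) hI0
  have e3 := mul_le_mul_of_nonneg_right (le_max_left 1 (2 * A)) hG0
  have e4 := mul_le_mul_of_nonneg_right (le_max_right 1 (2 * A)) hB0
  linarith

end
end
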